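/- A priori gradient bound for the critical Córdoba–Córdoba–Fontelos equation (CCF part of the theorem on critical SQG/CCF, eq. (gradsqgest)): There exists an absolute constant C > 0 such that the following holds. Let θ : ℝ × [0,T] → ℝ be smooth, periodic in x, and satisfy ∂_t θ = (Hθ) ∂_x θ − L θ, where Hθ(x,t) = (1/π) lim_{R→∞} lim_{ε→0+} ∫_{ε<|x−y|<R} θ(y,t)/(x−y) dy is the Hilbert transform in x and L f(x) = P.V. ∫_ℝ (f(x) − f(x+y))/|y|² dy. Then for all t ∈ [0,T], ‖∂_x θ(·,t)‖_{L^∞} ≤ ‖∂_x θ(·,0)‖_{L^∞} · exp( exp( C ‖θ(·,0)‖_{L^∞} ) ). -/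

import Mathlib

open Set MeasureTheory Filter Topology

/-- `HilbertPVAt f x v` says that the iterated principal value
`lim_{R→∞} lim_{ε→0+} ∫_{ε<|x−y|<R} f(y)/(x−y) dy` exists and equals `v`
(so that the Hilbert transform of `f` at `x` is `v/π`). -/
def HilbertPVAt (f : ℝ → ℝ) (x v : ℝ) : Prop :=
  ∃ g : ℝ → ℝ,
    (∀ R, 0 < R → Tendsto (fun ε => ∫ y in {y : ℝ | ε < |x - y| ∧ |x - y| < R}, f y / (x - y))
      (nhdsWithin 0 (Ioi 0)) (nhds (g R))) ∧
    Tendsto g atTop (nhds v)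

/-!
The proof is the modulus of continuity method of Kiselev, Nazarov and Volberg. A modulus `ω` with
`ω''(0+) = -∞` that is strictly obeyed by the data can only be broken after a first time at which
it is attained, `θ(x,t) - θ(y,t) = ω(ξ)` with `ξ = |x - y| > 0`. At such a pair `∂_x θ` takes the
same value, of size `ω'(ξ)`, at `x` and at `y`, so transport increases `θ(x,t) - θ(y,t)` at rate at
most `ω'(ξ) |Hθ(x) - Hθ(y)| ≲ ω'(ξ) (∫₀^ξ ω(z)/z dz + ξ ∫_ξ^∞ ω(z)/z² dz)`, whereas the dissipation
decreases it at rate at least of order `(2ω(ξ) - ω(2ξ))/ξ`.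

For `W(z) = log (1 + log (1 + z/(1 + √z)))` these two rates are comparable at every `ξ`. The drift
is quadratic in `ω` and the dissipation linear, so for a small fixed amplitude `a` all the moduli
`z ↦ a W(B z)`, `B > 0`, are preserved. As `W` grows doubly logarithmically, data with `|θ| ≤ M` and
`|∂_x θ| ≤ G` strictly obey such a modulus as soon as `a B > G exp (exp (6 M / a))`, and obeying it
forces `|∂_x θ| ≤ a B W'(0) = a B`.
-/

/-! ### Moduli of continuity -/

/-- `f` obeys the modulus of continuity `ω`. No regularity or monotonicity of `ω` is built in; only
its values on `[0, ∞)` matter. -/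
def HasModulus (ω f : ℝ → ℝ) : Prop :=
  ∀ x y, |f x - f y| ≤ ω |x - y|

namespace HasModulus

variable {ω f : ℝ → ℝ}

lemma sub_le (h : HasModulus ω f) (x y : ℝ) : f x - f y ≤ ω |x - y| :=
  (le_abs_self _).trans (h x y)

lemma nonneg (h : HasModulus ω f) {r : ℝ} (hr : 0 ≤ r) : 0 ≤ ω r := by
  simpa [abs_of_nonneg hr] using (abs_nonneg _).trans (h r 0)

lemma neg (h : HasModulus ω f) : HasModulus ω (-f) := fun x y => by
  simpa [neg_add_eq_sub, abs_sub_comm (f y)] using h x y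

lemma of_tendsto {ι : Type*} {l : Filter ι} [l.NeBot] {F : ι → ℝ → ℝ}
    (hF : ∀ᶠ i in l, HasModulus ω (F i)) (hlim : ∀ x, Tendsto (fun i => F i x) l (𝓝 (f x))) :
    HasModulus ω f := fun x y =>
  le_of_tendsto ((hlim x).sub (hlim y)).abs (hF.mono fun _ hi => hi x y)

lemma of_periodic {per : ℝ} (hper : 0 < per) (hf : Function.Periodic f per)
    (hω : MonotoneOn ω (Ici 0))
    (h : ∀ x ∈ Icc 0 per, ∀ r ∈ Icc 0 per, |f (x + r) - f x| ≤ ω r) : HasModulus ω f := by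
  intro a b
  wlog hab : b ≤ a generalizing a b
  · rw [abs_sub_comm, abs_sub_comm a b]
    exact this b a (le_of_not_ge hab)
  have hcell : ∀ r ∈ Icc 0 per, |f (b + r) - f b| ≤ ω r := fun r hr => by
    have hdiff : Function.Periodic (fun x => f (x + r) - f x) per := fun x => by
      simp only [add_right_comm x per r, hf _]
    obtain ⟨x, hx, hfx⟩ := hdiff.exists_mem_Ico₀ hper b
    exact (congrArg abs hfx).trans_le (h x (Ico_subset_Icc_self hx) r hr)
  set n := ⌊(a - b) / per⌋
  have hn : 0 ≤ (n : ℝ) * per :=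
    mul_nonneg (Int.cast_nonneg (Int.floor_nonneg.2 (div_nonneg (sub_nonneg.2 hab) hper.le)))
      hper.le
  have hn_le : n * per ≤ a - b := (le_div_iff₀ hper).1 (Int.floor_le _)
  have hn_lt : a - b < (n + 1) * per := (div_lt_iff₀ hper).1 (Int.lt_floor_add_one _)
  have hfa : f (b + (a - b - n * per)) = f a := by
    rw [show b + (a - b - n * per) = a - n * per by ring, hf.sub_int_mul_eq]
  rw [← hfa, abs_of_nonneg (sub_nonneg.2 hab)]
  exact (hcell _ ⟨by linarith, by linarith⟩).trans
    (hω (mem_Ici.2 (by linarith)) (mem_Ici.2 (by linarith)) (by linarith))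

lemma deriv_eq_of_touching (hf : Differentiable ℝ f) (hmod : HasModulus ω f) {x y : ℝ}
    (heq : f x - f y = ω |x - y|) : deriv f x = deriv f y := by
  have hmax : IsLocalMax (fun s => f (x + s) - f (y + s)) 0 :=
    Eventually.of_forall fun s => by
      simpa [heq] using hmod.sub_le (x + s) (y + s)
  have hderiv : HasDerivAt (fun s => f (x + s) - f (y + s)) (deriv f x - deriv f y) 0 :=
    .sub (.comp_const_add x 0 (by simpa using (hf x).hasDerivAt))
      (.comp_const_add y 0 (by simpa using (hf y).hasDerivAt))
  exact sub_eq_zero.1 (hmax.hasDerivAt_eq_zero hderiv)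

lemma deriv_eq_sign_mul_of_touching (hf : Differentiable ℝ f) (hmod : HasModulus ω f) {x y : ℝ}
    (hxy : x ≠ y) (hω : DifferentiableAt ℝ ω |x - y|) (heq : f x - f y = ω |x - y|) :
    deriv f x = SignType.sign (x - y) * deriv ω |x - y| := by
  have hmax : IsLocalMax (fun s => f s - ω |s - y|) x :=
    Eventually.of_forall fun s => by
      linarith [hmod.sub_le s y]
  have hderiv : HasDerivAt (fun s => f s - ω |s - y|)
      (deriv f x - deriv ω |x - y| * SignType.sign (x - y)) x :=
    (hf x).hasDerivAt.sub
      (hω.hasDerivAt.comp x ((hasDerivAt_abs (sub_ne_zero.2 hxy)).comp_sub_const x y))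
  rw [mul_comm]
  exact sub_eq_zero.1 (hmax.hasDerivAt_eq_zero hderiv)

/- A slope equal to `a` would force `a * r - ω r = O(r ^ 2)` by Taylor's formula. -/
lemma deriv_lt (hf : ContDiff ℝ 2 f) (hmod : HasModulus ω f) {a : ℝ}
    (hω : Tendsto (fun r => (a * r - ω r) / r ^ 2) (𝓝[>] 0) atTop) (x : ℝ) : deriv f x < a := by
  obtain ⟨K, hK⟩ := exists_taylor_mean_remainder_bound (n := 1) (f := f)
    (le_add_of_nonneg_right zero_le_one : x ≤ x + 1) hf.contDiffOn
  have htaylor : ∀ r ∈ Ioo (0 : ℝ) 1, deriv f x * r ≤ f (x + r) - f x + K * r ^ 2 := by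
    intro r hr
    have hr' : x + r ∈ Icc x (x + 1) := ⟨by linarith [hr.1], by linarith [hr.2]⟩
    have hslope : derivWithin f (Icc x (x + 1)) x = deriv f x :=
      (hf.differentiable two_ne_zero x).derivWithin
        (uniqueDiffOn_Icc (lt_add_one x) x (left_mem_Icc.2 (by linarith)))
    have := neg_le_of_abs_le (hK (x + r) hr')
    simp only [taylorWithinEval_succ, taylor_within_zero_eval, zero_add, iteratedDerivWithin_one,
      hslope, add_sub_cancel_left, smul_eq_mul] at this
    norm_num at this
    linarith
  obtain ⟨r, hrK, hr⟩ := ((hω.eventually_gt_atTop K).and (Ioo_mem_nhdsGT one_pos)).exists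
  rw [lt_div_iff₀ (pow_pos hr.1 2)] at hrK
  have hmodr := hmod.sub_le (x + r) x
  rw [add_sub_cancel_left, abs_of_pos hr.1] at hmodr
  exact lt_of_mul_lt_mul_right (by linarith [htaylor r hr]) hr.1.le

lemma abs_deriv_lt (hf : ContDiff ℝ 2 f) (hmod : HasModulus ω f) {a : ℝ}
    (hω : Tendsto (fun r => (a * r - ω r) / r ^ 2) (𝓝[>] 0) atTop) (x : ℝ) : |deriv f x| < a := by
  have hneg : deriv (-f) x < a := hmod.neg.deriv_lt hf.neg hω x
  rw [deriv.neg] at hneg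
  exact abs_lt.2 ⟨by linarith, hmod.deriv_lt hf hω x⟩

end HasModulus

/-! ### The Hilbert transform under a modulus of continuity -/

/-- The Kiselev–Nazarov–Volberg bound `∫₀^ξ ω(z)/z dz + ξ ∫_ξ^∞ ω(z)/z² dz` for the oscillation of
the Hilbert transform at distance `ξ`, up to an absolute constant. -/
noncomputable def hilbertModulus (ω : ℝ → ℝ) (ξ : ℝ) : ℝ :=
  (∫ z in (0 : ℝ)..ξ, ω z / z) + ξ * ∫ z in Ioi ξ, ω z / z ^ 2

/-- The symmetric second difference of `F` at `x` with step `z`. -/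
def symmSecondDiff (F : ℝ → ℝ) (x z : ℝ) : ℝ :=
  F (x - z) + F (x + z) - 2 * F x

lemma eqOn_rpow_neg_two_inv_sq {a : ℝ} (ha : 0 < a) :
    EqOn (fun z : ℝ => z ^ (-2 : ℝ)) (fun z => (z ^ 2)⁻¹) (Ioi a) := fun z hz => by
  simp [Real.rpow_neg (ha.trans hz).le]

lemma integrableOn_Ioi_inv_sq {a : ℝ} (ha : 0 < a) :
    IntegrableOn (fun z : ℝ => (z ^ 2)⁻¹) (Ioi a) :=
  (integrableOn_Ioi_rpow_of_lt (by norm_num) ha).congr_fun (eqOn_rpow_neg_two_inv_sq ha)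
    measurableSet_Ioi

lemma integral_Ioi_inv_sq {a : ℝ} (ha : 0 < a) : ∫ z in Ioi a, (z ^ 2)⁻¹ = a⁻¹ := by
  rw [← setIntegral_congr_fun measurableSet_Ioi (eqOn_rpow_neg_two_inv_sq ha),
    integral_Ioi_rpow_of_lt (by norm_num) ha]
  norm_num [Real.rpow_neg_one]

section MonotoneModulus

variable {ω : ℝ → ℝ}

lemma intervalIntegrable_div_pow_of_monotoneOn (hω : MonotoneOn ω (Ici 0)) (n : ℕ) {a b : ℝ}
    (ha : 0 < a) (hab : a ≤ b) : IntervalIntegrable (fun z => ω z / z ^ n) volume a b := by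
  have hpos : ∀ z ∈ uIcc a b, 0 < z := fun z hz => ha.trans_le (uIcc_of_le hab ▸ hz).1
  exact (hω.mono fun z hz => (hpos z hz).le).intervalIntegrable.mul_continuousOn
    (ContinuousOn.inv₀ (by fun_prop) fun z hz => (pow_pos (hpos z hz) n).ne')

lemma div_le_setIntegral_Ioi_div_sq (hω : MonotoneOn ω (Ici 0)) {ξ : ℝ} (hξ : 0 < ξ)
    (hint : IntegrableOn (fun z => ω z / z ^ 2) (Ioi ξ)) :
    ω ξ / ξ ≤ ∫ z in Ioi ξ, ω z / z ^ 2 := by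
  calc ω ξ / ξ = ∫ z in Ioi ξ, ω ξ * (z ^ 2)⁻¹ := by
        rw [integral_const_mul, integral_Ioi_inv_sq hξ, div_eq_mul_inv]
    _ ≤ ∫ z in Ioi ξ, ω z / z ^ 2 :=
        setIntegral_mono_on ((integrableOn_Ioi_inv_sq hξ).const_mul _) hint
          measurableSet_Ioi fun z hz => by
            rw [← div_eq_mul_inv]
            have hle : ω ξ ≤ ω z := hω hξ.le (hξ.trans hz).le (le_of_lt hz)
            gcongr

lemma div_add_intervalIntegral_div_sq_le (hω : MonotoneOn ω (Ici 0)) {ξ R : ℝ} (hξ : 0 < ξ)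
    (hR : ξ ≤ R) (hint : IntegrableOn (fun z => ω z / z ^ 2) (Ioi ξ)) :
    ω R / R + ∫ z in ξ..R, ω z / z ^ 2 ≤ ∫ z in Ioi ξ, ω z / z ^ 2 := by
  have hint_R := hint.mono_set (Ioi_subset_Ioi hR)
  rw [← intervalIntegral.integral_Ioi_sub_Ioi hint hR]
  linarith [div_le_setIntegral_Ioi_div_sq hω (hξ.trans_le hR) hint_R]

lemma intervalIntegral_div_le_of_monotoneOn (hω : MonotoneOn ω (Ici 0)) (hω0 : 0 ≤ ω 0) {ξ : ℝ}
    (hξ : 0 < ξ) (hint : IntegrableOn (fun z => ω z / z ^ 2) (Ioi ξ)) :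
    ∫ z in ξ..2 * ξ, ω z / z ≤ 2 * (ξ * ∫ z in Ioi ξ, ω z / z ^ 2) := by
  have hξ₂ : ξ ≤ 2 * ξ := by linarith
  have hnonneg : ∀ z, 0 ≤ z → 0 ≤ ω z := fun z hz => hω0.trans (hω self_mem_Ici hz hz)
  calc ∫ z in ξ..2 * ξ, ω z / z ≤ ∫ z in ξ..2 * ξ, 2 * ξ * (ω z / z ^ 2) := by
        refine intervalIntegral.integral_mono_on hξ₂
          (by simpa using intervalIntegrable_div_pow_of_monotoneOn hω 1 hξ hξ₂)
          ((intervalIntegrable_div_pow_of_monotoneOn hω 2 hξ hξ₂).const_mul _) fun z hz => ?_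
        have hz0 : 0 < z := hξ.trans_le hz.1
        rw [show ω z / z = z * (ω z / z ^ 2) by field_simp]
        exact mul_le_mul_of_nonneg_right hz.2 (div_nonneg (hnonneg z hz0.le) (sq_nonneg z))
    _ = 2 * (ξ * ∫ z in ξ..2 * ξ, ω z / z ^ 2) := by
        rw [intervalIntegral.integral_const_mul, mul_assoc]
    _ ≤ 2 * (ξ * ∫ z in Ioi ξ, ω z / z ^ 2) := by
        have htail := div_add_intervalIntegral_div_sq_le hω hξ hξ₂ hint
        have hend := div_nonneg (hnonneg (2 * ξ) (by positivity)) (by positivity : 0 ≤ 2 * ξ)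
        gcongr
        linarith

lemma intervalIntegral_comp_two_mul_div_le (hω : MonotoneOn ω (Ici 0)) (hω0 : 0 ≤ ω 0)
    {ε ξ : ℝ} (hε : 0 < ε) (hεξ : ε ≤ ξ)
    (hnear : IntervalIntegrable (fun z => ω z / z) volume 0 ξ)
    (hfar : IntegrableOn (fun z => ω z / z ^ 2) (Ioi ξ)) :
    ∫ z in ε..ξ, ω (2 * z) / z ≤
      (∫ z in (0 : ℝ)..ξ, ω z / z) + 2 * (ξ * ∫ z in Ioi ξ, ω z / z ^ 2) := by
  have hξ : 0 < ξ := hε.trans_le hεξ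
  have hnonneg : ∀ z, 0 ≤ z → 0 ≤ ω z := fun z hz => hω0.trans (hω self_mem_Ici hz hz)
  have hmid : IntervalIntegrable (fun z => ω z / z) volume ξ (2 * ξ) := by
    simpa using intervalIntegrable_div_pow_of_monotoneOn hω 1 hξ (by linarith)
  have hscale : ∀ z, ω (2 * z) / z = 2 * (ω (2 * z) / (2 * z)) := fun z => by
    rw [← mul_div_assoc, mul_div_mul_left _ _ two_ne_zero]
  calc ∫ z in ε..ξ, ω (2 * z) / z = ∫ z in 2 * ε..2 * ξ, ω z / z := by
        simp_rw [hscale, intervalIntegral.integral_const_mul]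
        exact intervalIntegral.mul_integral_comp_mul_left (f := fun z => ω z / z) 2
    _ ≤ ∫ z in (0 : ℝ)..2 * ξ, ω z / z :=
        intervalIntegral.integral_mono_interval (by linarith) (by linarith) le_rfl
          ((ae_restrict_mem measurableSet_Ioc).mono fun z hz =>
            div_nonneg (hnonneg z hz.1.le) hz.1.le) (hnear.trans hmid)
    _ ≤ _ := by
        rw [← intervalIntegral.integral_add_adjacent_intervals hnear hmid]
        gcongr
        exact intervalIntegral_div_le_of_monotoneOn hω hω0 hξ hfar

end MonotoneModulus

lemma annulus_eq_union_Ioo (x : ℝ) {ε : ℝ} (hε : 0 ≤ ε) (R : ℝ) :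
    {y : ℝ | ε < |x - y| ∧ |x - y| < R} = Ioo (x - R) (x - ε) ∪ Ioo (x + ε) (x + R) := by
  ext y
  simp only [mem_ofPred_eq, mem_union, mem_Ioo, lt_abs, abs_lt]
  constructor
  · rintro ⟨hleft | hright, hlower, hupper⟩
    · exact .inl ⟨by linarith, by linarith⟩
    · exact .inr ⟨by linarith, by linarith⟩
  · rintro (⟨hlower, hupper⟩ | ⟨hlower, hupper⟩)
    · exact ⟨.inl (by linarith), by linarith, by linarith⟩
    · exact ⟨.inr (by linarith), by linarith, by linarith⟩

section HilbertKernel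

variable {f : ℝ → ℝ}

lemma setIntegral_annulus_eq (hf : Continuous f) (x : ℝ) {ε R : ℝ} (hε : 0 < ε) (hR : ε < R) :
    ∫ y in {y : ℝ | ε < |x - y| ∧ |x - y| < R}, f y / (x - y) =
      ∫ z in ε..R, (f (x - z) - f (x + z)) / z := by
  have hdisj : Disjoint (Ioo (x - R) (x - ε)) (Ioo (x + ε) (x + R)) :=
    Set.disjoint_left.2 fun y hy hy' => by linarith [hy.2, hy'.1]
  have hint : ∀ a b : ℝ, x ∉ Icc a b → IntegrableOn (fun y => f y / (x - y)) (Ioo a b) :=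
    fun a b hx => (ContinuousOn.integrableOn_Icc <| hf.continuousOn.div (by fun_prop)
      fun y hy h => hx (by rwa [sub_eq_zero.1 h])).mono_set Ioo_subset_Icc_self
  have hint_div : ∀ g : ℝ → ℝ, Continuous g →
      IntervalIntegrable (fun z => g z / z) volume ε R := fun g hg =>
    (hg.continuousOn.div continuousOn_id fun z hz =>
      (hε.trans_le (uIcc_of_le hR.le ▸ hz).1).ne').intervalIntegrable
  rw [annulus_eq_union_Ioo x hε.le, setIntegral_union hdisj measurableSet_Ioo
      (hint _ _ fun h => by linarith [h.2]) (hint _ _ fun h => by linarith [h.1]),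
    ← integral_Ioc_eq_integral_Ioo, ← integral_Ioc_eq_integral_Ioo,
    ← intervalIntegral.integral_of_le (by linarith),
    ← intervalIntegral.integral_of_le (by linarith),
    ← intervalIntegral.integral_comp_sub_left (fun y => f y / (x - y)) x,
    ← intervalIntegral.integral_comp_add_left (fun y => f y / (x - y)) x]
  simp only [sub_sub_cancel, sub_add_cancel_left, div_neg, intervalIntegral.integral_neg, sub_div]
  rw [intervalIntegral.integral_sub (hint_div _ (by fun_prop)) (hint_div _ (by fun_prop)),
    sub_eq_add_neg]

lemma intervalIntegrable_sub_div (hf : Continuous f) (x : ℝ) {a b : ℝ} (ha : 0 < a) (hab : a ≤ b) :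
    IntervalIntegrable (fun z => (f (x - z) - f (x + z)) / z) volume a b :=
  (ContinuousOn.div (by fun_prop) continuousOn_id fun _ hz =>
    (ha.trans_le (uIcc_of_le hab ▸ hz).1).ne').intervalIntegrable

lemma intervalIntegrable_symmSecondDiff_div_sq {F : ℝ → ℝ} (hF : Continuous F) (x : ℝ) {a b : ℝ}
    (ha : 0 < a) (hab : a ≤ b) :
    IntervalIntegrable (fun z => symmSecondDiff F x z / z ^ 2) volume a b :=
  (ContinuousOn.div (by unfold symmSecondDiff; fun_prop) (by fun_prop) fun _ hz =>
    (pow_pos (ha.trans_le (uIcc_of_le hab ▸ hz).1) 2).ne').intervalIntegrable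

lemma intervalIntegral_sub_div_eq (hf : Continuous f) {F : ℝ → ℝ}
    (hF : ∀ s, HasDerivAt F (f s) s) (x : ℝ) {a b : ℝ} (ha : 0 < a) (hab : a ≤ b) :
    ∫ z in a..b, (f (x - z) - f (x + z)) / z =
      symmSecondDiff F x a / a - symmSecondDiff F x b / b -
        ∫ z in a..b, symmSecondDiff F x z / z ^ 2 := by
  have hFc : Continuous F := continuous_iff_continuousAt.2 fun s => (hF s).continuousAt
  have hderiv : ∀ z ∈ uIcc a b, HasDerivAt (fun z => -(symmSecondDiff F x z / z))
      ((f (x - z) - f (x + z)) / z + symmSecondDiff F x z / z ^ 2) z := by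
    intro z hz
    have hz0 : z ≠ 0 := (ha.trans_le (uIcc_of_le hab ▸ hz).1).ne'
    have hdiff : HasDerivAt (symmSecondDiff F x) (-f (x - z) + f (x + z)) z :=
      (((hF (x - z)).comp_const_sub x z).add ((hF (x + z)).comp_const_add x z)).sub_const _
    refine (hdiff.div (hasDerivAt_id z) hz0).neg.congr_deriv ?_
    simp only [id]
    field_simp
    ring
  have hf_int := intervalIntegrable_sub_div hf x ha hab
  have hF_int := intervalIntegrable_symmSecondDiff_div_sq hFc x ha hab
  have hftc := intervalIntegral.integral_eq_sub_of_hasDerivAt hderiv (hf_int.add hF_int)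
  rw [intervalIntegral.integral_add hf_int hF_int] at hftc
  linarith

end HilbertKernel

namespace HasModulus

variable {ω f : ℝ → ℝ}

lemma abs_intervalIntegral_sub_div_le (hmod : HasModulus ω f) (hω : MonotoneOn ω (Ici 0)) (x : ℝ)
    {ε ξ : ℝ} (hε : 0 < ε) (hεξ : ε ≤ ξ) :
    |∫ z in ε..ξ, (f (x - z) - f (x + z)) / z| ≤ ∫ z in ε..ξ, ω (2 * z) / z := by
  have hω₂ : MonotoneOn (fun z => ω (2 * z)) (Ici 0) := fun a ha b hb hab =>
    hω (mem_Ici.2 (mul_nonneg zero_le_two ha))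
      (mem_Ici.2 (mul_nonneg zero_le_two hb)) (by linarith)
  rw [← Real.norm_eq_abs]
  refine intervalIntegral.norm_integral_le_of_norm_le hεξ (Eventually.of_forall fun z hz => ?_)
    (by simpa using intervalIntegrable_div_pow_of_monotoneOn hω₂ 1 hε hεξ)
  have hz0 : 0 < z := hε.trans hz.1
  have hdiff := hmod (x - z) (x + z)
  rw [show x - z - (x + z) = -(2 * z) by ring, abs_neg,
    abs_of_pos (by positivity : 0 < 2 * z)] at hdiff
  rw [Real.norm_eq_abs, abs_div, abs_of_pos hz0]
  gcongr

lemma abs_symmSecondDiff_sub_le (hmod : HasModulus ω f) {F : ℝ → ℝ}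
    (hF : ∀ s, HasDerivAt F (f s) s) (x y : ℝ) {z : ℝ} (hz : 0 < z) :
    |symmSecondDiff F x z - symmSecondDiff F y z| ≤ 2 * |x - y| * ω z := by
  have hderiv : ∀ s ∈ (univ : Set ℝ), HasDerivWithinAt (fun s => symmSecondDiff F s z)
      (symmSecondDiff f s z) univ s := fun s _ =>
    ((((hF (s - z)).comp_sub_const s z).add ((hF (s + z)).comp_add_const s z)).sub
      ((hF s).const_mul 2)).hasDerivWithinAt
  rw [mul_right_comm]
  refine convex_univ.norm_image_sub_le_of_norm_hasDerivWithin_le hderiv (fun s _ => ?_)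
    (mem_univ y) (mem_univ x)
  have hleft := hmod (s - z) s
  have hright := hmod (s + z) s
  rw [sub_sub_cancel_left, abs_neg, abs_of_pos hz] at hleft
  rw [add_sub_cancel_left, abs_of_pos hz] at hright
  calc |symmSecondDiff f s z| = |(f (s - z) - f s) + (f (s + z) - f s)| := by
        rw [symmSecondDiff]; ring_nf
    _ ≤ |f (s - z) - f s| + |f (s + z) - f s| := abs_add_le _ _
    _ ≤ 2 * ω z := by linarith

lemma abs_intervalIntegral_symmSecondDiff_sub_le (hmod : HasModulus ω f)
    (hω : MonotoneOn ω (Ici 0)) {F : ℝ → ℝ} (hF : ∀ s, HasDerivAt F (f s) s) (x y : ℝ) {a b : ℝ}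
    (ha : 0 < a) (hab : a ≤ b) :
    |(∫ z in a..b, symmSecondDiff F x z / z ^ 2) - ∫ z in a..b, symmSecondDiff F y z / z ^ 2| ≤
      2 * |x - y| * ∫ z in a..b, ω z / z ^ 2 := by
  have hFc : Continuous F := continuous_iff_continuousAt.2 fun s => (hF s).continuousAt
  rw [← intervalIntegral.integral_sub (intervalIntegrable_symmSecondDiff_div_sq hFc x ha hab)
    (intervalIntegrable_symmSecondDiff_div_sq hFc y ha hab), ← intervalIntegral.integral_const_mul,
    ← Real.norm_eq_abs]
  refine intervalIntegral.norm_integral_le_of_norm_le hab (Eventually.of_forall fun z hz => ?_)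
    ((intervalIntegrable_div_pow_of_monotoneOn hω 2 ha hab).const_mul _)
  rw [Real.norm_eq_abs, ← sub_div, abs_div, abs_of_nonneg (sq_nonneg z), ← mul_div_assoc]
  gcongr
  exact hmod.abs_symmSecondDiff_sub_le hF x y (ha.trans hz.1)

/- Integrating by parts against a primitive of `f` trades the kernel `1 / z` for `1 / z ^ 2`, whose
tail is integrable against `ω`. -/
lemma abs_intervalIntegral_sub_div_sub_le (hmod : HasModulus ω f) (hω : MonotoneOn ω (Ici 0))
    (hf : Continuous f) (x y : ℝ) {a b : ℝ} (ha : 0 < a) (hab : a ≤ b) :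
    |(∫ z in a..b, (f (x - z) - f (x + z)) / z) - ∫ z in a..b, (f (y - z) - f (y + z)) / z| ≤
      2 * |x - y| * (ω a / a + (ω b / b + ∫ z in a..b, ω z / z ^ 2)) := by
  obtain ⟨F, hF⟩ : ∃ F : ℝ → ℝ, ∀ s, HasDerivAt F (f s) s :=
    ⟨_, fun s => (hf.integral_hasStrictDerivAt 0 s).hasDerivAt⟩
  have hboundary : ∀ z, 0 < z →
      |symmSecondDiff F x z / z - symmSecondDiff F y z / z| ≤ 2 * |x - y| * (ω z / z) := by
    intro z hz
    rw [← sub_div, abs_div, abs_of_pos hz, ← mul_div_assoc]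
    exact div_le_div_of_nonneg_right (hmod.abs_symmSecondDiff_sub_le hF x y hz) hz.le
  have hboundary_a := abs_le.1 (hboundary a ha)
  have hboundary_b := abs_le.1 (hboundary b (ha.trans_le hab))
  have hintegral := abs_le.1 (hmod.abs_intervalIntegral_symmSecondDiff_sub_le hω hF x y ha hab)
  rw [intervalIntegral_sub_div_eq hf hF x ha hab, intervalIntegral_sub_div_eq hf hF y ha hab,
    mul_add, mul_add, abs_le]
  constructor <;> linarith

lemma abs_hilbert_sub_le (hmod : HasModulus ω f) (hω : MonotoneOn ω (Ici 0)) (hf : Continuous f)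
    {x y : ℝ} (hxy : x ≠ y)
    (hnear : IntervalIntegrable (fun z => ω z / z) volume 0 |x - y|)
    (hfar : IntegrableOn (fun z => ω z / z ^ 2) (Ioi |x - y|)) {u v : ℝ}
    (hu : HilbertPVAt f x u) (hv : HilbertPVAt f y v) :
    |u - v| ≤ 8 * hilbertModulus ω |x - y| := by
  set ξ := |x - y| with hξ_def
  have hξ : 0 < ξ := abs_pos.2 (sub_ne_zero.2 hxy)
  obtain ⟨g, hg, hgu⟩ := hu
  obtain ⟨k, hk, hkv⟩ := hv
  refine le_of_tendsto (hgu.sub hkv).abs ?_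
  filter_upwards [eventually_gt_atTop ξ] with R hR
  have hR0 := hξ.trans hR
  refine le_of_tendsto ((hg R hR0).sub (hk R hR0)).abs ?_
  filter_upwards [Ioo_mem_nhdsGT hξ] with ε ⟨hε, hεξ⟩
  rw [setIntegral_annulus_eq hf x hε (hεξ.trans hR), setIntegral_annulus_eq hf y hε (hεξ.trans hR),
    ← intervalIntegral.integral_add_adjacent_intervals
      (intervalIntegrable_sub_div hf x hε hεξ.le) (intervalIntegrable_sub_div hf x hξ hR.le),
    ← intervalIntegral.integral_add_adjacent_intervals
      (intervalIntegrable_sub_div hf y hε hεξ.le) (intervalIntegrable_sub_div hf y hξ hR.le)]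
  have hnear_le := fun s => abs_le.1 <|
    (hmod.abs_intervalIntegral_sub_div_le hω s hε hεξ.le).trans
      (intervalIntegral_comp_two_mul_div_le hω (hmod.nonneg le_rfl) hε hεξ.le hnear hfar)
  have hfar_le := (hmod.abs_intervalIntegral_sub_div_sub_le hω hf x y hξ hR.le).trans <|
    mul_le_mul_of_nonneg_left (add_le_add (div_le_setIntegral_Ioi_div_sq hω hξ hfar)
      (div_add_intervalIntegral_div_sq_le hω hξ hR.le hfar)) (mul_nonneg zero_le_two (abs_nonneg _))
  have hnear_nonneg : 0 ≤ ∫ z in (0 : ℝ)..ξ, ω z / z :=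
    intervalIntegral.integral_nonneg hξ.le fun z hz => div_nonneg (hmod.nonneg hz.1) hz.1
  rw [← hξ_def, abs_le] at hfar_le
  rw [hilbertModulus, abs_le]
  constructor <;> linarith [(hnear_le x).1, (hnear_le x).2, (hnear_le y).1, (hnear_le y).2]

end HasModulus

/-! ### The dissipation at a touching pair -/

/-- `HalfLaplacianPVAt f x v` says that the principal value `P.V. ∫ (f(x) − f(x+y))/|y|² dy` exists
and equals `v`. -/
def HalfLaplacianPVAt (f : ℝ → ℝ) (x v : ℝ) : Prop :=
  Tendsto (fun ε => ∫ y in {y : ℝ | ε < |y|}, (f x - f (x + y)) / y ^ (2 : ℕ))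
    (nhdsWithin 0 (Ioi 0)) (nhds v)

/-- The excess of the decrement of `f` from `x` to `x + z` over its decrement from `y` to
`y + z`. -/
def decrementGap (f : ℝ → ℝ) (x y z : ℝ) : ℝ :=
  (f x - f (x + z)) - (f y - f (y + z))

lemma integrableOn_sub_div_sq {f : ℝ → ℝ} (hf : Continuous f) {M : ℝ} (hM : ∀ a, |f a| ≤ M)
    (x : ℝ) {ε : ℝ} (hε : 0 < ε) :
    IntegrableOn (fun z => (f x - f (x + z)) / z ^ 2) {z : ℝ | ε < |z|} := by
  have hinv : IntegrableOn (fun z : ℝ => (z ^ 2)⁻¹) {z : ℝ | ε < |z|} := by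
    have hset : {z : ℝ | ε < |z|} = Iio (-ε) ∪ Ioi ε := by
      ext z
      simp [lt_abs, lt_neg, or_comm]
    have hneg : IntegrableOn (fun z : ℝ => (z ^ 2)⁻¹) (Iio (-ε)) := by
      simpa using (integrableOn_Ioi_inv_sq hε).comp_neg
    exact hset ▸ hneg.union (integrableOn_Ioi_inv_sq hε)
  have hbound : ∀ z, ‖f x - f (x + z)‖ ≤ 2 * M := fun z =>
    (abs_sub _ _).trans (by linarith [hM x, hM (x + z)])
  exact hinv.bdd_mul (Continuous.aestronglyMeasurable (by fun_prop))
    (Eventually.of_forall hbound)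

lemma div_le_intervalIntegral_div_sq {g : ℝ → ℝ} (hg : Continuous g) (hg0 : ∀ z, 0 ≤ g z)
    {c ξ : ℝ} (hξ : 0 < ξ) (hc : ∀ z, c ≤ g z + g (z + ξ)) :
    c / (9 * ξ) ≤ ∫ z in ξ..3 * ξ, g z / z ^ 2 := by
  have hshift : ∫ z in ξ..2 * ξ, g (z + ξ) = ∫ z in 2 * ξ..3 * ξ, g z := by
    rw [intervalIntegral.integral_comp_add_right]
    ring_nf
  have hpair : c * ξ ≤ ∫ z in ξ..3 * ξ, g z := by
    calc c * ξ = ∫ _ in ξ..2 * ξ, c := by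
          rw [intervalIntegral.integral_const, smul_eq_mul]
          ring
      _ ≤ ∫ z in ξ..2 * ξ, (g z + g (z + ξ)) :=
          intervalIntegral.integral_mono_on (by linarith) intervalIntegrable_const
            (Continuous.intervalIntegrable (by fun_prop) _ _) fun z _ => hc z
      _ = ∫ z in ξ..3 * ξ, g z := by
          rw [intervalIntegral.integral_add (hg.intervalIntegrable _ _)
            (Continuous.intervalIntegrable (by fun_prop) _ _), hshift,
            intervalIntegral.integral_add_adjacent_intervals (hg.intervalIntegrable _ _)
            (hg.intervalIntegrable _ _)]
  calc c / (9 * ξ) = c * ξ / (9 * ξ ^ 2) := by field_simp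
    _ ≤ (∫ z in ξ..3 * ξ, g z) / (9 * ξ ^ 2) := by gcongr
    _ = ∫ z in ξ..3 * ξ, g z / (9 * ξ ^ 2) := (intervalIntegral.integral_div _ _).symm
    _ ≤ ∫ z in ξ..3 * ξ, g z / z ^ 2 := by
        have hpos : ∀ z ∈ Icc ξ (3 * ξ), 0 < z := fun z hz => hξ.trans_le hz.1
        refine intervalIntegral.integral_mono_on (by linarith)
          (Continuous.intervalIntegrable (by fun_prop) _ _)
          (ContinuousOn.intervalIntegrable_of_Icc (by linarith) <| hg.continuousOn.div
            (by fun_prop) fun z hz => (pow_pos (hpos z hz) 2).ne') fun z hz => ?_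
        have hz_sq : z ^ 2 ≤ 9 * ξ ^ 2 :=
          (pow_le_pow_left₀ (hpos z hz).le hz.2 2).trans_eq (by ring)
        exact div_le_div_of_nonneg_left (hg0 z) (pow_pos (hpos z hz) 2) hz_sq

namespace HasModulus

variable {ω f : ℝ → ℝ} {x y : ℝ}

lemma decrementGap_nonneg (hmod : HasModulus ω f) (heq : f x - f y = ω |x - y|) (z : ℝ) :
    0 ≤ decrementGap f x y z := by
  have hz := hmod.sub_le (x + z) (y + z)
  rw [add_sub_add_right_eq_sub] at hz
  rw [decrementGap]
  linarith

/- Among the four points `x + z`, `y + z`, `x + z + |x - y|`, `y + z + |x - y|`, two coincide and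
the remaining two are at distance `2 |x - y|`. -/
lemma le_decrementGap_add (hmod : HasModulus ω f) (heq : f x - f y = ω |x - y|) (z : ℝ) :
    2 * ω |x - y| - ω (2 * |x - y|) ≤
      decrementGap f x y z + decrementGap f x y (z + |x - y|) := by
  simp only [decrementGap]
  rcases le_total y x with hyx | hxy
  · have hfar := hmod.sub_le (x + (z + (x - y))) (y + z)
    rw [show x + (z + (x - y)) - (y + z) = 2 * (x - y) by ring, abs_mul, abs_two] at hfar
    rw [abs_of_nonneg (sub_nonneg.2 hyx)] at *
    rw [show y + (z + (x - y)) = x + z by ring]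
    linarith
  · have hfar := hmod.sub_le (x + z) (y + (z + (y - x)))
    rw [show x + z - (y + (z + (y - x))) = 2 * (x - y) by ring, abs_mul, abs_two] at hfar
    rw [abs_of_nonpos (sub_nonpos.2 hxy), neg_sub] at *
    rw [show x + (z + (y - x)) = y + z by ring]
    linarith

lemma le_halfLaplacian_sub (hmod : HasModulus ω f) (hf : Continuous f) {M : ℝ}
    (hM : ∀ a, |f a| ≤ M) (hxy : x ≠ y) (heq : f x - f y = ω |x - y|) {u v : ℝ}
    (hu : HalfLaplacianPVAt f x u) (hv : HalfLaplacianPVAt f y v) :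
    (2 * ω |x - y| - ω (2 * |x - y|)) / (9 * |x - y|) ≤ u - v := by
  have hξ : 0 < |x - y| := abs_pos.2 (sub_ne_zero.2 hxy)
  have hgap : Continuous (decrementGap f x y) := by
    unfold decrementGap
    fun_prop
  refine ge_of_tendsto (hu.sub hv) ?_
  filter_upwards [Ioo_mem_nhdsGT hξ] with ε ⟨hε, hεξ⟩
  have hint_x := integrableOn_sub_div_sq hf hM x hε
  have hint_y := integrableOn_sub_div_sq hf hM y hε
  have hint : IntegrableOn (fun z => decrementGap f x y z / z ^ 2) {z : ℝ | ε < |z|} := by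
    simpa only [decrementGap, sub_div, Pi.sub_def] using hint_x.sub hint_y
  calc (2 * ω |x - y| - ω (2 * |x - y|)) / (9 * |x - y|)
      ≤ ∫ z in |x - y|..3 * |x - y|, decrementGap f x y z / z ^ 2 :=
        div_le_intervalIntegral_div_sq hgap (hmod.decrementGap_nonneg heq) hξ
          (hmod.le_decrementGap_add heq)
    _ = ∫ z in Ioc |x - y| (3 * |x - y|), decrementGap f x y z / z ^ 2 :=
        intervalIntegral.integral_of_le (by linarith)
    _ ≤ ∫ z in {z : ℝ | ε < |z|}, decrementGap f x y z / z ^ 2 :=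
        setIntegral_mono_set hint
          (Eventually.of_forall fun z => div_nonneg (hmod.decrementGap_nonneg heq z) (sq_nonneg z))
          (LE.le.eventuallyLE fun z hz =>
            (hεξ.trans hz.1).trans_le (le_abs_self z))
    _ = _ := by
        rw [← integral_sub hint_x hint_y]
        simp only [decrementGap, sub_div]

end HasModulus

/-! ### The breakthrough scenario -/

/-- A differentiable modulus of continuity of Kiselev–Nazarov–Volberg type: it vanishes at `0`, is
nondecreasing, and satisfies `ω''(0+) = -∞`, the latter being expressed through the second order
Taylor quotient. Differentiability at `0` is two-sided, so that `deriv ω 0` is the slope at `0`; it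
constrains the otherwise irrelevant extension of `ω` to negative arguments. -/
structure IsKNVModulus (ω : ℝ → ℝ) : Prop where
  map_zero : ω 0 = 0
  monotoneOn : MonotoneOn ω (Ici 0)
  differentiableAt : ∀ r, 0 ≤ r → DifferentiableAt ℝ ω r
  tendsto_atTop : Tendsto (fun r => (deriv ω 0 * r - ω r) / r ^ 2) (𝓝[>] 0) atTop

/-- A modulus of continuity that the critical CCF equation preserves: at any distance `ξ` where it
could be attained, the transport term is beaten by the dissipation. -/
structure IsCCFModulus (ω : ℝ → ℝ) : Prop extends IsKNVModulus ω where
  integrableOn_div_sq : ∀ ξ, 0 < ξ → IntegrableOn (fun z => ω z / z ^ 2) (Ioi ξ)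
  drift_lt : ∀ ξ, 0 < ξ →
    deriv ω ξ * (8 / Real.pi * hilbertModulus ω ξ) < (2 * ω ξ - ω (2 * ξ)) / (9 * ξ)

namespace IsKNVModulus

variable {ω : ℝ → ℝ}

lemma mul_dslope (hω : IsKNVModulus ω) (r : ℝ) : r * dslope ω 0 r = ω r := by
  simpa [hω.map_zero] using sub_smul_dslope ω 0 r

lemma continuousOn_dslope (hω : IsKNVModulus ω) : ContinuousOn (dslope ω 0) (Ici 0) := by
  intro r hr
  rcases eq_or_ne r 0 with rfl | hr0
  · exact (continuousAt_dslope_same.2 (hω.differentiableAt 0 le_rfl)).continuousWithinAt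
  · exact ((continuousAt_dslope_of_ne hr0).2
      (hω.differentiableAt r hr).continuousAt).continuousWithinAt

lemma deriv_nonneg (hω : IsKNVModulus ω) {r : ℝ} (hr : 0 < r) : 0 ≤ deriv ω r := by
  rw [← derivWithin_of_mem_nhds (Ici_mem_nhds hr)]
  exact hω.monotoneOn.derivWithin_nonneg

lemma intervalIntegrable_div (hω : IsKNVModulus ω) {ξ : ℝ} (hξ : 0 ≤ ξ) :
    IntervalIntegrable (fun z => ω z / z) volume 0 ξ := by
  have hdslope : EqOn (dslope ω 0) (fun z => ω z / z) (uIoc 0 ξ) := fun z hz => by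
    rw [uIoc_of_le hξ] at hz
    exact (eq_div_iff hz.1.ne').2 (by rw [mul_comm, hω.mul_dslope])
  have hint : IntervalIntegrable (dslope ω 0) volume 0 ξ :=
    (hω.continuousOn_dslope.mono Icc_subset_Ici_self).intervalIntegrable_of_Icc hξ
  exact hint.congr hdslope

end IsKNVModulus

namespace HasModulus

variable {ω f : ℝ → ℝ}

lemma drift_sub_dissipation_neg_of_touching (hmod : HasModulus ω f) (hω : IsCCFModulus ω)
    (hf : Differentiable ℝ f) {M : ℝ} (hM : ∀ a, |f a| ≤ M) {x y : ℝ} (hxy : x ≠ y)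
    (heq : f x - f y = ω |x - y|) {Hx Hy Lx Ly : ℝ}
    (hHx : HilbertPVAt f x (Real.pi * Hx)) (hHy : HilbertPVAt f y (Real.pi * Hy))
    (hLx : HalfLaplacianPVAt f x Lx) (hLy : HalfLaplacianPVAt f y Ly) :
    (Hx * deriv f x - Lx) - (Hy * deriv f y - Ly) < 0 := by
  have hξ : 0 < |x - y| := abs_pos.2 (sub_ne_zero.2 hxy)
  have hhilbert : |Hx - Hy| ≤ 8 / Real.pi * hilbertModulus ω |x - y| := by
    have h := hmod.abs_hilbert_sub_le hω.monotoneOn hf.continuous hxy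
      (hω.intervalIntegrable_div hξ.le) (hω.integrableOn_div_sq _ hξ) hHx hHy
    rw [← mul_sub, abs_mul, abs_of_pos Real.pi_pos] at h
    rwa [div_mul_eq_mul_div, le_div_iff₀' Real.pi_pos]
  have hslope : |deriv f x| ≤ deriv ω |x - y| := by
    rw [hmod.deriv_eq_sign_mul_of_touching hf hxy (hω.differentiableAt _ hξ.le) heq, abs_mul,
      abs_of_nonneg (hω.deriv_nonneg hξ)]
    refine mul_le_of_le_one_left (hω.deriv_nonneg hξ) ?_
    rcases lt_or_gt_of_ne (sub_ne_zero.2 hxy) with h | h <;> simp [h]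
  have hdrift : Hx * deriv f x - Hy * deriv f y ≤
      deriv ω |x - y| * (8 / Real.pi * hilbertModulus ω |x - y|) := by
    rw [← hmod.deriv_eq_of_touching hf heq, ← sub_mul, mul_comm]
    refine (le_abs_self _).trans ?_
    rw [abs_mul]
    exact mul_le_mul hslope hhilbert (abs_nonneg _) (hω.deriv_nonneg hξ)
  have hdissipation := hmod.le_halfLaplacian_sub hf.continuous hM hxy heq hLx hLy
  linarith [hω.drift_lt _ hξ]

end HasModulus

/-- The average of `f'` over the segment from `x` to `x + h`: the difference quotient of `f`,
extended continuously to `h = 0`. -/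
noncomputable def meanSlope (f : ℝ → ℝ) (x h : ℝ) : ℝ :=
  ∫ s in (0 : ℝ)..1, deriv f (x + h * s)

lemma meanSlope_zero (f : ℝ → ℝ) (x : ℝ) : meanSlope f x 0 = deriv f x := by
  simp [meanSlope]

lemma mul_meanSlope {f : ℝ → ℝ} (hf : ContDiff ℝ 1 f) (x h : ℝ) :
    h * meanSlope f x h = f (x + h) - f x := by
  rw [meanSlope, intervalIntegral.mul_integral_comp_add_mul,
    intervalIntegral.integral_deriv_eq_sub (fun _ _ => hf.differentiable one_ne_zero _)
      ((hf.continuous_deriv le_rfl).intervalIntegrable _ _)]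
  simp

lemma continuous_meanSlope {X : Type*} [TopologicalSpace X] {f : X → ℝ → ℝ}
    (hf : Continuous fun p : X × ℝ => deriv (f p.1) p.2) :
    Continuous fun p : X × ℝ × ℝ => meanSlope (f p.1) p.2.1 p.2.2 :=
  intervalIntegral.continuous_parametric_intervalIntegral_of_continuous'
    (f := fun (p : X × ℝ × ℝ) s => deriv (f p.1) (p.2.1 + p.2.2 * s))
    (hf.comp (by fun_prop : Continuous fun q : (X × ℝ × ℝ) × ℝ =>
      (q.1.1, q.1.2.1 + q.1.2.2 * q.2))) 0 1

namespace IsKNVModulus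

variable {ω f : ℝ → ℝ}

lemma hasModulus_of_abs_meanSlope_le (hω : IsKNVModulus ω) (hf : ContDiff ℝ 1 f) {per : ℝ}
    (hper : 0 < per) (hfper : Function.Periodic f per)
    (h : ∀ x ∈ Icc 0 per, ∀ r ∈ Icc 0 per, |meanSlope f x r| ≤ dslope ω 0 r) : HasModulus ω f :=
  .of_periodic hper hfper hω.monotoneOn fun x hx r hr => by
    rw [← mul_meanSlope hf, ← hω.mul_dslope, abs_mul, abs_of_nonneg hr.1]
    exact mul_le_mul_of_nonneg_left (h x hx r hr) hr.1

lemma exists_touching_of_dslope_le (hω : IsKNVModulus ω) (hf : ContDiff ℝ 2 f)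
    (hmod : HasModulus ω f) {x r : ℝ} (hr : 0 ≤ r) (h : dslope ω 0 r ≤ |meanSlope f x r|) :
    ∃ y z, y ≠ z ∧ f y - f z = ω |y - z| := by
  rcases hr.eq_or_lt with rfl | hr
  · rw [dslope_same, meanSlope_zero] at h
    exact absurd (hmod.abs_deriv_lt hf hω.tendsto_atTop x) h.not_gt
  · have hge : ω r ≤ |f (x + r) - f x| := by
      rw [← mul_meanSlope (hf.of_le one_le_two), ← hω.mul_dslope, abs_mul, abs_of_pos hr]
      exact mul_le_mul_of_nonneg_left h hr.le
    have hle : |f (x + r) - f x| ≤ ω r := by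
      simpa [abs_of_pos hr] using hmod (x + r) x
    rcases abs_choice (f (x + r) - f x) with habs | habs
    · exact ⟨x + r, x, by linarith, by simp [abs_of_pos hr]; linarith⟩
    · exact ⟨x, x + r, by linarith, by simp [abs_of_pos hr]; linarith⟩

end IsKNVModulus

/-- A time-dependent family `θ(·,t)`, `t ∈ [0,T]`, of `C²` functions of period `per`, continuous in
time, whose space derivative is jointly continuous. The first argument of `θ` is space. -/
structure IsPeriodicC2Path (T per : ℝ) (θ : ℝ → ℝ → ℝ) : Prop where
  per_pos : 0 < per
  contDiff : ∀ t ∈ Icc 0 T, ContDiff ℝ 2 fun x => θ x t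
  continuousOn_deriv :
    ContinuousOn (fun p : ℝ × ℝ => deriv (fun x => θ x p.2) p.1) (univ ×ˢ Icc 0 T)
  periodic : ∀ t ∈ Icc 0 T, Function.Periodic (fun x => θ x t) per
  continuousOn_time : ∀ x, ContinuousOn (θ x) (Icc 0 T)

namespace IsPeriodicC2Path

variable {T per : ℝ} {θ : ℝ → ℝ → ℝ} {ω : ℝ → ℝ}

/- The supremum of `|meanSlope| - dslope ω 0` over the compact cell `[0, per]²` is what has to cross
zero, so the violations of the modulus form a compact set, which has an earliest element. -/
lemma exists_earliest_dslope_le (hθ : IsPeriodicC2Path T per θ) (hω : IsKNVModulus ω) {t : ℝ}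
    (ht : t ∈ Icc 0 T) (hviol : ¬HasModulus ω fun x => θ x t) :
    ∃ τ ∈ Icc 0 T, (∃ x r, 0 ≤ r ∧ dslope ω 0 r ≤ |meanSlope (fun x => θ x τ) x r|) ∧
      ∀ s ∈ Ico 0 τ, HasModulus ω fun x => θ x s := by
  have hslope : Continuous fun p : Icc 0 T × ℝ × ℝ =>
      meanSlope (fun x => θ x p.1) p.2.1 p.2.2 :=
    continuous_meanSlope (f := fun (t : Icc 0 T) x => θ x t) <|
      hθ.continuousOn_deriv.comp_continuous (f := fun p : Icc 0 T × ℝ => (p.2, (p.1 : ℝ)))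
        (by fun_prop) fun p => ⟨mem_univ _, p.1.2⟩
  let cell : Set (Icc 0 T × ℝ × ℝ) := univ ×ˢ Icc 0 per ×ˢ Icc 0 per
  let violations : Set (Icc 0 T × ℝ × ℝ) :=
    {p ∈ cell | dslope ω 0 p.2.2 ≤ |meanSlope (fun x => θ x p.1) p.2.1 p.2.2|}
  have hcell : IsCompact cell := isCompact_univ.prod (isCompact_Icc.prod isCompact_Icc)
  have hcompact : IsCompact violations := hcell.of_isClosed_subset
    (hcell.isClosed.isClosed_le (hω.continuousOn_dslope.comp (by fun_prop) fun p hp => hp.2.2.1)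
      hslope.abs.continuousOn) (sep_subset _ _)
  have hmod : ∀ s (hs : s ∈ Icc 0 T),
      (∀ x r, ((⟨s, hs⟩, x, r) : Icc 0 T × ℝ × ℝ) ∉ violations) → HasModulus ω fun x => θ x s :=
    fun s hs hnot => hω.hasModulus_of_abs_meanSlope_le ((hθ.contDiff s hs).of_le one_le_two)
      hθ.per_pos (hθ.periodic s hs) fun x hx r hr =>
        le_of_lt <| not_le.1 fun hle => hnot x r ⟨⟨mem_univ _, hx, hr⟩, hle⟩
  have hne : violations.Nonempty := by
    by_contra hempty
    exact hviol (hmod t ht fun x r hmem => hempty ⟨_, hmem⟩)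
  obtain ⟨⟨τ, x, r⟩, ⟨hmem, hle⟩, hmin⟩ :=
    hcompact.exists_isMinOn hne (f := fun p => (p.1 : ℝ)) (by fun_prop)
  exact ⟨τ, τ.2, ⟨x, r, hmem.2.2.1, hle⟩, fun s hs =>
    hmod s ⟨hs.1, hs.2.le.trans τ.2.2⟩ fun x r hviol => hs.2.not_ge (hmin hviol)⟩

lemma exists_first_touching (hθ : IsPeriodicC2Path T per θ) (hω : IsKNVModulus ω)
    (hinit : ∀ x y, x ≠ y → |θ x 0 - θ y 0| < ω |x - y|) {t : ℝ} (ht : t ∈ Icc 0 T)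
    (hviol : ¬HasModulus ω fun x => θ x t) :
    ∃ τ ∈ Ioc 0 T, ∃ x y, x ≠ y ∧ θ x τ - θ y τ = ω |x - y| ∧
      ∀ s ∈ Icc 0 τ, HasModulus ω fun x => θ x s := by
  obtain ⟨τ, hτ, ⟨x, r, hr, hle⟩, hbefore⟩ := hθ.exists_earliest_dslope_le hω ht hviol
  have hmod : HasModulus ω fun x => θ x τ := by
    rcases hτ.1.eq_or_lt with rfl | hτ0
    · intro x y
      rcases eq_or_ne x y with rfl | hxy
      · simp [hω.map_zero]
      · exact (hinit x y hxy).le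
    · have : (𝓝[Ico 0 τ] τ).NeBot := by
        rw [← mem_closure_iff_nhdsWithin_neBot, closure_Ico hτ0.ne]
        exact right_mem_Icc.2 hτ.1
      exact .of_tendsto (eventually_mem_nhdsWithin.mono hbefore) fun x =>
        (hθ.continuousOn_time x τ hτ).mono (Ico_subset_Icc_self.trans (Icc_subset_Icc_right hτ.2))
  obtain ⟨x, y, hxy, htouch⟩ := hω.exists_touching_of_dslope_le (hθ.contDiff τ hτ) hmod hr hle
  have hτ0 : τ ≠ 0 := by
    rintro rfl
    exact ((le_abs_self _).trans_lt (hinit x y hxy)).ne htouch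
  refine ⟨τ, ⟨hτ.1.lt_of_ne' hτ0, hτ.2⟩, x, y, hxy, htouch, fun s hs => ?_⟩
  rcases hs.2.eq_or_lt with rfl | hsτ
  exacts [hmod, hbefore s ⟨hs.1, hsτ⟩]

end IsPeriodicC2Path

lemma bddAbove_range_abs_of_periodic {f : ℝ → ℝ} {per : ℝ} (hf : Continuous f) (hper : 0 < per)
    (hfper : Function.Periodic f per) : BddAbove (range fun x => |f x|) :=
  ((hfper.comp abs).compact_of_continuous hper.ne' hf.abs).bddAbove

lemma nonneg_of_hasDerivWithinAt_of_le_left {g : ℝ → ℝ} {g' T τ : ℝ} (hτ : τ ∈ Ioc 0 T)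
    (hg : HasDerivWithinAt g g' (Icc 0 T) τ) (hle : ∀ s ∈ Icc 0 τ, g s ≤ g τ) : 0 ≤ g' := by
  have hmax : IsLocalMaxOn g (Icc 0 τ) τ := eventually_mem_nhdsWithin.mono hle
  have hcone : 0 - τ ∈ posTangentConeAt (Icc 0 τ) τ :=
    sub_mem_posTangentConeAt_of_segment_subset
      ((convex_Icc 0 τ).segment_subset (right_mem_Icc.2 hτ.1.le) (left_mem_Icc.2 hτ.1.le))
  have hderiv := hmax.hasFDerivWithinAt_nonpos
    (hg.mono (Icc_subset_Icc_right hτ.2)).hasFDerivWithinAt hcone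
  rw [ContinuousLinearMap.toSpanSingleton_apply, smul_eq_mul, zero_sub, neg_mul] at hderiv
  exact nonneg_of_mul_nonneg_right (neg_nonpos.1 hderiv) hτ.1

/-- `θ` is a `C²` periodic solution of `∂_t θ = (Hθ) ∂_x θ − L θ` on `[0,T]`, the functions `Hθ` and
`Lθ` being the values of the Hilbert transform and of the dissipation. -/
structure IsCCFSolution (T per : ℝ) (θ Hθ Lθ : ℝ → ℝ → ℝ) : Prop
    extends IsPeriodicC2Path T per θ where
  hilbert : ∀ t ∈ Icc 0 T, ∀ x, HilbertPVAt (fun x => θ x t) x (Real.pi * Hθ x t)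
  dissipation : ∀ t ∈ Icc 0 T, ∀ x, HalfLaplacianPVAt (fun x => θ x t) x (Lθ x t)
  hasDerivWithinAt : ∀ x, ∀ t ∈ Icc 0 T,
    HasDerivWithinAt (θ x) (Hθ x t * deriv (fun x => θ x t) x - Lθ x t) (Icc 0 T) t

theorem IsCCFSolution.hasModulus {T per : ℝ} {θ Hθ Lθ : ℝ → ℝ → ℝ} {ω : ℝ → ℝ}
    (hθ : IsCCFSolution T per θ Hθ Lθ) (hω : IsCCFModulus ω)
    (hinit : ∀ x y, x ≠ y → |θ x 0 - θ y 0| < ω |x - y|) {t : ℝ} (ht : t ∈ Icc 0 T) :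
    HasModulus ω fun x => θ x t := by
  by_contra hviol
  obtain ⟨τ, hτ, x, y, hxy, htouch, hmod⟩ :=
    hθ.exists_first_touching hω.toIsKNVModulus hinit ht hviol
  have hτ' : τ ∈ Icc 0 T := Ioc_subset_Icc_self hτ
  have hnonneg := nonneg_of_hasDerivWithinAt_of_le_left hτ
    ((hθ.hasDerivWithinAt x τ hτ').sub (hθ.hasDerivWithinAt y τ hτ'))
    fun s hs => ((hmod s hs).sub_le x y).trans_eq htouch.symm
  have hsmooth := hθ.contDiff τ hτ'
  obtain ⟨M, hM⟩ := bddAbove_range_abs_of_periodic hsmooth.continuous hθ.per_pos (hθ.periodic τ hτ')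
  exact hnonneg.not_gt <|
    (hmod τ (right_mem_Icc.2 hτ.1.le)).drift_sub_dissipation_neg_of_touching hω
      (hsmooth.differentiable two_ne_zero) (fun a => hM (mem_range_self a)) hxy htouch
      (hθ.hilbert τ hτ' x) (hθ.hilbert τ hτ' y) (hθ.dissipation τ hτ' x) (hθ.dissipation τ hτ' y)

/-! ### A doubly logarithmic modulus -/

section Scaling

variable {ω : ℝ → ℝ} {a B : ℝ}

lemma hilbertModulus_scale (ω : ℝ → ℝ) (a : ℝ) (hB : 0 < B) (ξ : ℝ) :
    hilbertModulus (fun z => a * ω (B * z)) ξ = a * hilbertModulus ω (B * ξ) := by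
  have hnear : ∫ z in (0 : ℝ)..ξ, a * ω (B * z) / z = a * ∫ z in (0 : ℝ)..B * ξ, ω z / z := by
    have hscale : ∀ z, a * ω (B * z) / z = a * B * (ω (B * z) / (B * z)) := fun z => by
      rw [mul_assoc a B, ← mul_div_assoc B, mul_div_mul_left _ _ hB.ne', mul_div_assoc]
    simp_rw [hscale, intervalIntegral.integral_const_mul, mul_assoc]
    rw [intervalIntegral.mul_integral_comp_mul_left (f := fun z => ω z / z), mul_zero]
  have hfar : ∫ z in Ioi ξ, a * ω (B * z) / z ^ 2 = a * B * ∫ z in Ioi (B * ξ), ω z / z ^ 2 := by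
    have hscale : ∀ z, a * ω (B * z) / z ^ 2 = a * B ^ 2 * (ω (B * z) / (B * z) ^ 2) := fun z => by
      rw [mul_assoc a, mul_pow, ← mul_div_assoc (B ^ 2),
        mul_div_mul_left _ _ (pow_ne_zero 2 hB.ne'), mul_div_assoc]
    simp_rw [hscale, integral_const_mul]
    rw [integral_comp_mul_left_Ioi (fun z => ω z / z ^ 2) ξ hB, smul_eq_mul]
    field_simp
  rw [hilbertModulus, hilbertModulus, hnear, hfar]
  ring

lemma deriv_scale (ω : ℝ → ℝ) (a B r : ℝ) :
    deriv (fun z => a * ω (B * z)) r = a * B * deriv ω (B * r) := by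
  simp [deriv_comp_mul_left, mul_assoc]

namespace IsKNVModulus

lemma scale (hω : IsKNVModulus ω) (ha : 0 < a) (hB : 0 < B) :
    IsKNVModulus fun z => a * ω (B * z) where
  map_zero := by simp [hω.map_zero]
  monotoneOn r hr s hs hrs := by
    have := hω.monotoneOn (mem_Ici.2 (mul_nonneg hB.le hr)) (mem_Ici.2 (mul_nonneg hB.le hs))
      (by gcongr)
    dsimp only
    gcongr
  differentiableAt r hr :=
    ((hω.differentiableAt _ (by positivity)).comp r (by fun_prop)).const_mul a
  tendsto_atTop := by
    have hmul : Tendsto (B * ·) (𝓝[>] 0) (𝓝[>] (0 : ℝ)) :=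
      tendsto_nhdsWithin_of_tendsto_nhds_of_eventually_within _
        ((Continuous.tendsto' (by fun_prop) 0 0 (mul_zero B)).mono_left nhdsWithin_le_nhds)
        (eventually_mem_nhdsWithin.mono fun r (hr : 0 < r) => mul_pos hB hr)
    refine ((hω.tendsto_atTop.comp hmul).const_mul_atTop
      (by positivity : 0 < a * B ^ 2)).congr fun r => ?_
    simp only [Function.comp_apply, deriv_scale, mul_zero]
    field_simp

/- Scaling in amplitude damps the quadratic drift against the linear dissipation, while the drift
condition is invariant under scaling in space. -/
lemma isCCFModulus_scale (hω : IsKNVModulus ω) (ha : 0 < a) (hB : 0 < B)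
    (hint : ∀ ξ, 0 < ξ → IntegrableOn (fun z => ω z / z ^ 2) (Ioi ξ))
    (hdrift : ∀ ξ, 0 < ξ →
      72 / Real.pi * a * (ξ * deriv ω ξ * hilbertModulus ω ξ) < 2 * ω ξ - ω (2 * ξ)) :
    IsCCFModulus fun z => a * ω (B * z) where
  toIsKNVModulus := hω.scale ha hB
  integrableOn_div_sq ξ hξ := by
    have hscale := (integrableOn_Ioi_comp_mul_left_iff (fun z => ω z / z ^ 2) ξ hB).2
      (hint _ (by positivity))
    have : IntegrableOn (fun z => a * B ^ 2 * (ω (B * z) / (B * z) ^ 2)) (Ioi ξ) :=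
      hscale.const_mul _
    refine this.congr_fun (fun z _ => ?_) measurableSet_Ioi
    field_simp
  drift_lt ξ hξ := by
    rw [hilbertModulus_scale ω a hB, deriv_scale, mul_left_comm B 2 ξ, lt_div_iff₀ (by positivity)]
    have := mul_lt_mul_of_pos_left (hdrift (B * ξ) (by positivity)) ha
    refine (Eq.trans_lt ?_ this).trans_eq (by ring)
    ring

end IsKNVModulus

end Scaling

lemma eqOn_rpow_sqrt_div_sq {ξ : ℝ} (hξ : 0 < ξ) :
    EqOn (fun z : ℝ => z ^ (-3 / 2 : ℝ)) (fun z => √z / z ^ 2) (Ioi ξ) := fun z hz => by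
  have hz : 0 < z := hξ.trans hz
  dsimp only
  rw [Real.sqrt_eq_rpow, ← Real.rpow_natCast, ← Real.rpow_sub hz]
  norm_num

lemma integrableOn_Ioi_sqrt_div_sq {ξ : ℝ} (hξ : 0 < ξ) :
    IntegrableOn (fun z => √z / z ^ 2) (Ioi ξ) :=
  (integrableOn_Ioi_rpow_of_lt (by norm_num) hξ).congr_fun (eqOn_rpow_sqrt_div_sq hξ)
    measurableSet_Ioi

lemma integral_Ioi_sqrt_div_sq {ξ : ℝ} (hξ : 0 < ξ) :
    ∫ z in Ioi ξ, √z / z ^ 2 = 2 * √ξ / ξ := by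
  rw [← setIntegral_congr_fun measurableSet_Ioi (eqOn_rpow_sqrt_div_sq hξ),
    integral_Ioi_rpow_of_lt (by norm_num) hξ, mul_div_assoc, Real.sqrt_div_self',
    Real.sqrt_eq_rpow, one_div, ← Real.rpow_neg hξ.le]
  norm_num
  ring

lemma mul_setIntegral_div_sq_le_of_le_sqrt {ω : ℝ → ℝ} {c ξ : ℝ} (hξ : 0 < ξ)
    (hint : IntegrableOn (fun z => ω z / z ^ 2) (Ioi ξ)) (hω : ∀ z, ξ < z → ω z ≤ c * √z) :
    ξ * ∫ z in Ioi ξ, ω z / z ^ 2 ≤ 2 * c * √ξ := by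
  calc ξ * ∫ z in Ioi ξ, ω z / z ^ 2 ≤ ξ * ∫ z in Ioi ξ, c * (√z / z ^ 2) := by
        gcongr ?_ * ?_
        refine setIntegral_mono_on hint ((integrableOn_Ioi_sqrt_div_sq hξ).const_mul c)
          measurableSet_Ioi fun z hz => ?_
        rw [← mul_div_assoc]
        have := hω z hz
        gcongr
    _ = 2 * c * √ξ := by
        rw [integral_const_mul, integral_Ioi_sqrt_div_sq hξ]
        field_simp

/-- The function `z / (1 + √z)`: it behaves like `z - z ^ (3 / 2)` at `0` and like `√z` at infinity.
Since `√z = 0` for `z < 0`, it is differentiable at `0`. -/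
noncomputable def softSqrt (z : ℝ) : ℝ :=
  z / (1 + √z)

/-- The inner logarithm `1 + log (1 + softSqrt z)` of `doubleLogModulus`. -/
noncomputable def innerLog (z : ℝ) : ℝ :=
  1 + Real.log (1 + softSqrt z)

/-- The modulus `log (1 + log (1 + z / (1 + √z)))`: it has slope `1` and second derivative `-∞` at
`0`, and grows like `log log z`. -/
noncomputable def doubleLogModulus (z : ℝ) : ℝ :=
  Real.log (innerLog z)

section softSqrt

variable {z : ℝ}

lemma softSqrt_nonneg (hz : 0 ≤ z) : 0 ≤ softSqrt z := by
  rw [softSqrt]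
  positivity

lemma softSqrt_le_self (hz : 0 ≤ z) : softSqrt z ≤ z :=
  div_le_self hz (by simp)

lemma softSqrt_eq (hz : 0 ≤ z) : softSqrt z = √z ^ 2 / (1 + √z) := by
  rw [softSqrt, Real.sq_sqrt hz]

lemma one_add_softSqrt_eq (hz : 0 ≤ z) : 1 + softSqrt z = (1 + √z + √z ^ 2) / (1 + √z) := by
  rw [softSqrt_eq hz]
  field_simp

lemma softSqrt_le_sqrt (hz : 0 ≤ z) : softSqrt z ≤ √z := by
  rw [softSqrt_eq hz, div_le_iff₀ (by positivity)]
  nlinarith [Real.sqrt_nonneg z]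

lemma sqrt_le_one_add_softSqrt (hz : 0 ≤ z) : √z ≤ 1 + softSqrt z := by
  rw [one_add_softSqrt_eq hz, le_div_iff₀ (by positivity)]
  nlinarith [Real.sqrt_nonneg z]

lemma hasDerivAt_softSqrt (hz : 0 ≤ z) :
    HasDerivAt softSqrt ((2 + √z) / (2 * (1 + √z) ^ 2)) z := by
  rcases hz.eq_or_lt with rfl | hz
  · have hcont : Tendsto (fun z => (1 + √z)⁻¹) (𝓝[≠] 0) (𝓝 1) := by
      have : ContinuousAt (fun z => (1 + √z)⁻¹) 0 := by fun_prop (disch := simp)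
      simpa using this.tendsto.mono_left nhdsWithin_le_nhds
    rw [hasDerivAt_iff_tendsto_slope]
    norm_num
    refine hcont.congr' (eventually_mem_nhdsWithin.mono fun z hz => ?_)
    have hz : z ≠ 0 := hz
    simp [slope_def_field, softSqrt]
    field_simp
  · refine ((hasDerivAt_id z).div ((Real.hasDerivAt_sqrt hz.ne').const_add 1)
      (by positivity)).congr_deriv ?_
    obtain ⟨s, hs, rfl⟩ : ∃ s, 0 < s ∧ s ^ 2 = z := ⟨√z, Real.sqrt_pos.2 hz, Real.sq_sqrt hz.le⟩
    rw [id, Real.sqrt_sq hs.le]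
    field_simp
    ring

lemma strictMonoOn_softSqrt : StrictMonoOn softSqrt (Ici 0) :=
  strictMonoOn_of_hasDerivWithinAt_pos (convex_Ici 0)
    (fun _ hz => (hasDerivAt_softSqrt hz).continuousAt.continuousWithinAt)
    (fun _ hz => (hasDerivAt_softSqrt (interior_subset hz)).hasDerivWithinAt)
    fun _ _ => by positivity

end softSqrt

section doubleLogModulus

variable {z : ℝ}

lemma one_le_innerLog (hz : 0 ≤ z) : 1 ≤ innerLog z :=
  le_add_of_nonneg_right (Real.log_nonneg (le_add_of_nonneg_right (softSqrt_nonneg hz)))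

lemma strictMonoOn_innerLog : StrictMonoOn innerLog (Ici 0) := fun r hr s hs hrs => by
  have := softSqrt_nonneg hr
  have := strictMonoOn_softSqrt hr hs hrs
  rw [innerLog, innerLog]
  gcongr

lemma innerLog_le_one_add_softSqrt (hz : 0 ≤ z) : innerLog z ≤ 1 + softSqrt z := by
  have := Real.log_le_sub_one_of_pos (add_pos_of_pos_of_nonneg one_pos (softSqrt_nonneg hz))
  rw [innerLog]
  linarith

lemma doubleLogModulus_zero : doubleLogModulus 0 = 0 := by
  simp [doubleLogModulus, innerLog, softSqrt]

lemma doubleLogModulus_nonneg (hz : 0 ≤ z) : 0 ≤ doubleLogModulus z :=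
  Real.log_nonneg (one_le_innerLog hz)

lemma strictMonoOn_doubleLogModulus : StrictMonoOn doubleLogModulus (Ici 0) :=
  fun _ hr _ hs hrs =>
    Real.log_lt_log (one_pos.trans_le (one_le_innerLog hr)) (strictMonoOn_innerLog hr hs hrs)

lemma doubleLogModulus_le_softSqrt (hz : 0 ≤ z) : doubleLogModulus z ≤ softSqrt z := by
  have := Real.log_le_sub_one_of_pos (one_pos.trans_le (one_le_innerLog hz))
  rw [doubleLogModulus]
  linarith [innerLog_le_one_add_softSqrt hz]

lemma hasDerivAt_doubleLogModulus (hz : 0 ≤ z) :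
    HasDerivAt doubleLogModulus
      ((1 + (1 + √z)⁻¹) / (2 * (1 + √z + √z ^ 2) * innerLog z)) z := by
  have hv := softSqrt_nonneg hz
  have hΛ := one_pos.trans_le (one_le_innerLog hz)
  refine ((((hasDerivAt_softSqrt hz).const_add 1).log (by positivity)).const_add 1 |>.log
    hΛ.ne').congr_deriv ?_
  change _ / innerLog z = _
  rw [one_add_softSqrt_eq hz]
  field_simp
  ring

lemma mul_deriv_doubleLogModulus (hz : 0 ≤ z) :
    z * deriv doubleLogModulus z =
      √z ^ 2 * (2 + √z) / (2 * (1 + √z) * (1 + √z + √z ^ 2) * innerLog z) := by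
  have hΛ := one_pos.trans_le (one_le_innerLog hz)
  rw [(hasDerivAt_doubleLogModulus hz).deriv, Real.sq_sqrt hz]
  field_simp
  ring

lemma antitoneOn_deriv_doubleLogModulus : AntitoneOn (deriv doubleLogModulus) (Ici 0) :=
  fun r hr s hs hrs => by
    have := strictMonoOn_innerLog.monotoneOn hr hs hrs
    have := one_pos.trans_le (one_le_innerLog hr)
    rw [(hasDerivAt_doubleLogModulus hr).deriv, (hasDerivAt_doubleLogModulus hs).deriv]
    gcongr

lemma deriv_doubleLogModulus_zero : deriv doubleLogModulus 0 = 1 := by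
  rw [(hasDerivAt_doubleLogModulus le_rfl).deriv]
  norm_num [innerLog, softSqrt]

lemma tendsto_doubleLogModulus_taylor_quotient :
    Tendsto (fun r => (deriv doubleLogModulus 0 * r - doubleLogModulus r) / r ^ 2) (𝓝[>] 0)
      atTop := by
  have hlower : Tendsto (fun r => (√r * (1 + √r))⁻¹) (𝓝[>] 0) atTop := by
    refine tendsto_inv_nhdsGT_zero.comp
      (tendsto_nhdsWithin_of_tendsto_nhds_of_eventually_within _ ?_ ?_)
    · exact (Continuous.tendsto' (by fun_prop) 0 0 (by simp)).mono_left nhdsWithin_le_nhds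
    · filter_upwards [eventually_mem_nhdsWithin] with r (hr : 0 < r)
      have := Real.sqrt_pos.2 hr
      exact mem_Ioi.2 (by positivity)
  refine tendsto_atTop_mono' _ ?_ hlower
  filter_upwards [eventually_mem_nhdsWithin] with r (hr : 0 < r)
  calc (√r * (1 + √r))⁻¹ = (r - softSqrt r) / r ^ 2 := by
        obtain ⟨s, hs, rfl⟩ : ∃ s, 0 < s ∧ s ^ 2 = r := ⟨√r, Real.sqrt_pos.2 hr, Real.sq_sqrt hr.le⟩
        rw [softSqrt, Real.sqrt_sq hs.le]
        field_simp
        ring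
    _ ≤ _ := by
        rw [deriv_doubleLogModulus_zero, one_mul]
        gcongr
        exact doubleLogModulus_le_softSqrt hr.le

lemma isKNVModulus_doubleLogModulus : IsKNVModulus doubleLogModulus where
  map_zero := doubleLogModulus_zero
  monotoneOn := strictMonoOn_doubleLogModulus.monotoneOn
  differentiableAt _ hr := (hasDerivAt_doubleLogModulus hr).differentiableAt
  tendsto_atTop := tendsto_doubleLogModulus_taylor_quotient

lemma integrableOn_doubleLogModulus_div_sq (hz : 0 < z) :
    IntegrableOn (fun r => doubleLogModulus r / r ^ 2) (Ioi z) := by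
  refine (integrableOn_Ioi_sqrt_div_sq hz).mono' ?_ ?_
  · have hcont : ContinuousOn doubleLogModulus (Ioi z) := fun r hr =>
      (hasDerivAt_doubleLogModulus (hz.trans hr).le).continuousAt.continuousWithinAt
    exact (hcont.div (by fun_prop) fun r hr => pow_ne_zero 2 (hz.trans hr).ne').aestronglyMeasurable
      measurableSet_Ioi
  · refine (ae_restrict_mem measurableSet_Ioi).mono fun r hr => ?_
    have hr : 0 ≤ r := (hz.trans hr).le
    rw [Real.norm_of_nonneg (div_nonneg (doubleLogModulus_nonneg hr) (sq_nonneg r))]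
    gcongr
    exact (doubleLogModulus_le_softSqrt hr).trans (softSqrt_le_sqrt hr)

lemma doubleLogModulus_two_mul_le (hz : 0 ≤ z) :
    doubleLogModulus (2 * z) ≤ doubleLogModulus z + z * deriv doubleLogModulus z := by
  have hdiff : ∀ r ∈ Ici z, DifferentiableAt ℝ doubleLogModulus r := fun r hr =>
    (hasDerivAt_doubleLogModulus (hz.trans hr)).differentiableAt
  have := (convex_Ici z).image_sub_le_mul_sub_of_deriv_le
    (fun r hr => (hdiff r hr).continuousAt.continuousWithinAt)
    (fun r hr => (hdiff r (interior_subset hr)).differentiableWithinAt)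
    (fun r hr => antitoneOn_deriv_doubleLogModulus hz (hz.trans (interior_subset hr))
      (interior_subset hr))
    z self_mem_Ici (2 * z) (by simpa [two_mul] using hz) (by linarith)
  linarith

/- Two uses of `1 - t⁻¹ ≤ log t`, one for each logarithm. -/
lemma pow_three_div_le_doubleLogModulus_sub (hz : 0 ≤ z) :
    √z ^ 3 / (2 * (1 + √z) * (1 + √z + √z ^ 2) * innerLog z) ≤
      doubleLogModulus z - z * deriv doubleLogModulus z := by
  have hv := softSqrt_nonneg hz
  have hΛ := one_pos.trans_le (one_le_innerLog hz)
  have hinner : √z ^ 2 / (1 + √z + √z ^ 2) ≤ innerLog z - 1 := by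
    have h := Real.one_sub_inv_le_log_of_pos (by positivity : 0 < 1 + softSqrt z)
    rw [innerLog, add_sub_cancel_left]
    refine Eq.trans_le ?_ h
    rw [one_add_softSqrt_eq hz]
    field_simp
    ring
  have houter : √z ^ 2 / (1 + √z + √z ^ 2) / innerLog z ≤ doubleLogModulus z :=
    calc √z ^ 2 / (1 + √z + √z ^ 2) / innerLog z ≤ (innerLog z - 1) / innerLog z := by gcongr
      _ = 1 - (innerLog z)⁻¹ := by field_simp
      _ ≤ doubleLogModulus z := Real.one_sub_inv_le_log_of_pos hΛ
  refine le_sub_iff_add_le.2 (Eq.trans_le ?_ houter)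
  rw [mul_deriv_doubleLogModulus hz]
  field_simp
  ring

lemma mul_deriv_doubleLogModulus_le (hz : 0 ≤ z) :
    z * deriv doubleLogModulus z ≤ (2 * innerLog z)⁻¹ := by
  have hΛ := one_pos.trans_le (one_le_innerLog hz)
  rw [mul_deriv_doubleLogModulus hz, ← one_div, div_le_div_iff₀ (by positivity) (by positivity)]
  nlinarith [mul_nonneg hΛ.le (Real.sqrt_nonneg z), mul_nonneg hΛ.le hz]

end doubleLogModulus

section HilbertModulusBounds

variable {ξ z : ℝ}

lemma intervalIntegral_doubleLogModulus_div_le (hξ : 0 ≤ ξ) :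
    ∫ z in (0 : ℝ)..ξ, doubleLogModulus z / z ≤ ξ := by
  calc ∫ z in (0 : ℝ)..ξ, doubleLogModulus z / z ≤ ∫ _ in (0 : ℝ)..ξ, (1 : ℝ) :=
        intervalIntegral.integral_mono_on hξ
          (isKNVModulus_doubleLogModulus.intervalIntegrable_div hξ) (by simp) fun z hz =>
            div_le_one_of_le₀ ((doubleLogModulus_le_softSqrt hz.1).trans (softSqrt_le_self hz.1))
              hz.1
    _ = ξ := by simp

lemma intervalIntegral_doubleLogModulus_div_le_of_one_le (hξ : 1 ≤ ξ) :
    ∫ z in (0 : ℝ)..ξ, doubleLogModulus z / z ≤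
      1 + 2 * doubleLogModulus ξ * (innerLog ξ - 1) := by
  have hξ₀ : 0 < ξ := one_pos.trans_le hξ
  have hW := doubleLogModulus_nonneg hξ₀.le
  have hint₀ := isKNVModulus_doubleLogModulus.intervalIntegrable_div zero_le_one
  have hint₁ : IntervalIntegrable (fun z => doubleLogModulus z / z) volume 1 ξ := by
    simpa using intervalIntegrable_div_pow_of_monotoneOn
      strictMonoOn_doubleLogModulus.monotoneOn 1 one_pos hξ
  have hinv : IntervalIntegrable (fun z : ℝ => z⁻¹) volume 1 ξ :=
    intervalIntegral.intervalIntegrable_inv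
      (fun z hz => (one_pos.trans_le (uIcc_of_le hξ ▸ hz).1).ne') continuousOn_id
  have htail : ∫ z in (1 : ℝ)..ξ, doubleLogModulus z / z ≤ doubleLogModulus ξ * Real.log ξ :=
    calc ∫ z in (1 : ℝ)..ξ, doubleLogModulus z / z ≤ ∫ z in (1 : ℝ)..ξ, doubleLogModulus ξ * z⁻¹ :=
          intervalIntegral.integral_mono_on hξ hint₁ (hinv.const_mul _) fun z hz => by
            have hz₀ : 0 < z := one_pos.trans_le hz.1
            rw [← div_eq_mul_inv]
            have := strictMonoOn_doubleLogModulus.monotoneOn hz₀.le hξ₀.le hz.2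
            gcongr
      _ = doubleLogModulus ξ * Real.log ξ := by
          rw [intervalIntegral.integral_const_mul, integral_inv_of_pos one_pos hξ₀, div_one]
  have hlog : Real.log ξ ≤ 2 * (innerLog ξ - 1) := by
    rw [innerLog, add_sub_cancel_left]
    have := Real.log_le_log (Real.sqrt_pos.2 hξ₀) (sqrt_le_one_add_softSqrt hξ₀.le)
    rw [Real.log_sqrt hξ₀.le] at this
    linarith
  rw [← intervalIntegral.integral_add_adjacent_intervals hint₀ hint₁]
  have := mul_le_mul_of_nonneg_left hlog hW
  linarith [intervalIntegral_doubleLogModulus_div_le zero_le_one]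

lemma one_add_softSqrt_le_mul (hξ : 0 < ξ) (hz : ξ ≤ z) :
    1 + softSqrt z ≤ √(z / ξ) * (1 + softSqrt ξ) := by
  have hdecomp : ∀ {r : ℝ}, 0 ≤ r → 1 + softSqrt r = √r + (1 + √r)⁻¹ := fun hr => by
    rw [one_add_softSqrt_eq hr]
    field_simp
    ring
  have hq : 1 ≤ √(z / ξ) := Real.one_le_sqrt.2 ((one_le_div hξ).2 hz)
  rw [hdecomp (hξ.le.trans hz), hdecomp hξ.le, mul_add, ← Real.sqrt_mul' _ hξ.le,
    div_mul_cancel₀ _ hξ.ne']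
  gcongr
  exact (inv_anti₀ (by positivity) (by gcongr)).trans (le_mul_of_one_le_left (by positivity) hq)

lemma innerLog_le_mul (hξ : 0 < ξ) (hz : ξ ≤ z) : innerLog z ≤ √(z / ξ) * innerLog ξ := by
  have hv := softSqrt_nonneg hξ.le
  have hv' := softSqrt_nonneg (hξ.le.trans hz)
  have hq : 1 ≤ √(z / ξ) := Real.one_le_sqrt.2 ((one_le_div hξ).2 hz)
  have hΛ := one_le_innerLog hξ.le
  calc innerLog z ≤ 1 + Real.log (√(z / ξ) * (1 + softSqrt ξ)) := by
        rw [innerLog]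
        gcongr
        exact one_add_softSqrt_le_mul hξ hz
    _ = Real.log √(z / ξ) + innerLog ξ := by
        rw [Real.log_mul (by positivity) (by positivity), innerLog]
        ring
    _ ≤ (√(z / ξ) - 1) * innerLog ξ + innerLog ξ := by
        gcongr
        exact (Real.log_le_sub_one_of_pos (by positivity)).trans
          (le_mul_of_one_le_right (sub_nonneg.2 hq) hΛ)
    _ = √(z / ξ) * innerLog ξ := by ring

lemma doubleLogModulus_le_mul_sqrt (hξ : 0 < ξ) (hz : ξ ≤ z) :
    doubleLogModulus z ≤ (doubleLogModulus ξ + 1) / √ξ * √z := by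
  have hq : 1 ≤ √(z / ξ) := Real.one_le_sqrt.2 ((one_le_div hξ).2 hz)
  have hΛ := one_le_innerLog hξ.le
  have hΛ' := one_le_innerLog (hξ.le.trans hz)
  calc doubleLogModulus z ≤ Real.log (√(z / ξ) * innerLog ξ) :=
        Real.log_le_log (by positivity) (innerLog_le_mul hξ hz)
    _ = Real.log √(z / ξ) + doubleLogModulus ξ :=
        Real.log_mul (by positivity) (by positivity)
    _ ≤ √(z / ξ) * 1 + √(z / ξ) * doubleLogModulus ξ := by
        gcongr
        · rw [mul_one]
          exact Real.log_le_self (by positivity)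
        · exact le_mul_of_one_le_left (doubleLogModulus_nonneg hξ.le) hq
    _ = (doubleLogModulus ξ + 1) / √ξ * √z := by
        rw [Real.sqrt_div' _ hξ.le]
        ring

lemma hilbertModulus_doubleLogModulus_le_of_le_one (hξ : 0 < ξ) (hξ₁ : ξ ≤ 1) :
    hilbertModulus doubleLogModulus ξ ≤ 3 * √ξ := by
  have hfar := mul_setIntegral_div_sq_le_of_le_sqrt (c := 1) hξ
    (integrableOn_doubleLogModulus_div_sq hξ) fun z hz => by
      have hz : 0 ≤ z := (hξ.trans hz).le
      rw [one_mul]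
      exact (doubleLogModulus_le_softSqrt hz).trans (softSqrt_le_sqrt hz)
  have hself : ξ ≤ √ξ := Real.le_sqrt_of_sq_le (by nlinarith)
  rw [hilbertModulus]
  linarith [intervalIntegral_doubleLogModulus_div_le hξ.le]

lemma hilbertModulus_doubleLogModulus_le_of_one_le (hξ : 1 ≤ ξ) :
    hilbertModulus doubleLogModulus ξ ≤ 3 * (1 + doubleLogModulus ξ) * innerLog ξ := by
  have hξ₀ : 0 < ξ := one_pos.trans_le hξ
  have hfar := mul_setIntegral_div_sq_le_of_le_sqrt hξ₀ (integrableOn_doubleLogModulus_div_sq hξ₀)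
    fun z hz => doubleLogModulus_le_mul_sqrt hξ₀ hz.le
  rw [mul_assoc, div_mul_cancel₀ _ (Real.sqrt_pos.2 hξ₀).ne'] at hfar
  have hW := doubleLogModulus_nonneg hξ₀.le
  have hΛ := one_le_innerLog hξ₀.le
  rw [hilbertModulus]
  nlinarith [intervalIntegral_doubleLogModulus_div_le_of_one_le hξ, mul_nonneg hW (sub_nonneg.2 hΛ)]

lemma one_fourth_le_doubleLogModulus (hξ : 1 ≤ ξ) : 1 / 4 ≤ doubleLogModulus ξ := by
  have hinner : 2 / 5 ≤ Real.log (1 + softSqrt 1) := by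
    have := Real.le_log_one_add_of_nonneg (softSqrt_nonneg zero_le_one)
    norm_num [softSqrt] at this ⊢
    exact this
  have houter := Real.le_log_one_add_of_nonneg (by norm_num : (0 : ℝ) ≤ 2 / 5)
  calc (1 / 4 : ℝ) ≤ Real.log (1 + 2 / 5) := by linarith
    _ ≤ doubleLogModulus 1 := Real.log_le_log (by norm_num) (by rw [innerLog]; gcongr)
    _ ≤ doubleLogModulus ξ :=
        strictMonoOn_doubleLogModulus.monotoneOn (mem_Ici.2 zero_le_one)
          (mem_Ici.2 (zero_le_one.trans hξ)) hξ

lemma inv_innerLog_le_doubleLogModulus_sub (hξ : 1 ≤ ξ) :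
    (12 * innerLog ξ)⁻¹ ≤ doubleLogModulus ξ - ξ * deriv doubleLogModulus ξ := by
  have hξ₀ : 0 ≤ ξ := zero_le_one.trans hξ
  have hΛ := one_pos.trans_le (one_le_innerLog hξ₀)
  refine le_trans ?_ (pow_three_div_le_doubleLogModulus_sub hξ₀)
  rw [← one_div, div_le_div_iff₀ (by positivity) (by positivity)]
  have hs := sub_nonneg.2 (Real.one_le_sqrt.2 hξ)
  have : (1 + √ξ) * (1 + √ξ + √ξ ^ 2) ≤ 6 * √ξ ^ 3 := by
    nlinarith [mul_nonneg hs (Real.sqrt_nonneg ξ), mul_nonneg hs (sq_nonneg √ξ)]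
  nlinarith

lemma mul_deriv_mul_hilbertModulus_le_of_le_one (hξ : 0 < ξ) (hξ₁ : ξ ≤ 1) :
    ξ * deriv doubleLogModulus ξ * hilbertModulus doubleLogModulus ξ ≤
      53 * (doubleLogModulus ξ - ξ * deriv doubleLogModulus ξ) := by
  have hΛ := one_pos.trans_le (one_le_innerLog hξ.le)
  have hs := Real.sqrt_le_one.2 hξ₁
  calc ξ * deriv doubleLogModulus ξ * hilbertModulus doubleLogModulus ξ
      ≤ √ξ ^ 2 * (2 + √ξ) / (2 * (1 + √ξ) * (1 + √ξ + √ξ ^ 2) * innerLog ξ) * (3 * √ξ) := by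
        rw [mul_deriv_doubleLogModulus hξ.le]
        gcongr
        exact hilbertModulus_doubleLogModulus_le_of_le_one hξ hξ₁
    _ = 3 * (2 + √ξ) * (√ξ ^ 3 / (2 * (1 + √ξ) * (1 + √ξ + √ξ ^ 2) * innerLog ξ)) := by ring
    _ ≤ 53 * (doubleLogModulus ξ - ξ * deriv doubleLogModulus ξ) := by
        gcongr
        · linarith
        · exact pow_three_div_le_doubleLogModulus_sub hξ.le

lemma mul_deriv_mul_hilbertModulus_le_of_one_le (hξ : 1 ≤ ξ) :
    ξ * deriv doubleLogModulus ξ * hilbertModulus doubleLogModulus ξ ≤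
      53 * (doubleLogModulus ξ - ξ * deriv doubleLogModulus ξ) := by
  have hξ₀ : 0 < ξ := one_pos.trans_le hξ
  have hΛ := one_pos.trans_le (one_le_innerLog hξ₀.le)
  have hW := one_fourth_le_doubleLogModulus hξ
  have hslope := mul_deriv_doubleLogModulus_le hξ₀.le
  have hgap : doubleLogModulus ξ ≤ 7 * (doubleLogModulus ξ - ξ * deriv doubleLogModulus ξ) := by
    have hinv : (2 * innerLog ξ)⁻¹ = 6 * (12 * innerLog ξ)⁻¹ := by
      field_simp
      norm_num
    linarith [inv_innerLog_le_doubleLogModulus_sub hξ]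
  calc ξ * deriv doubleLogModulus ξ * hilbertModulus doubleLogModulus ξ
      ≤ (2 * innerLog ξ)⁻¹ * (3 * (1 + doubleLogModulus ξ) * innerLog ξ) := by
        exact mul_le_mul_of_nonneg hslope (hilbertModulus_doubleLogModulus_le_of_one_le hξ)
          (mul_nonneg hξ₀.le (isKNVModulus_doubleLogModulus.deriv_nonneg hξ₀)) (by positivity)
    _ = 3 / 2 * (1 + doubleLogModulus ξ) := by field_simp
    _ ≤ 53 * (doubleLogModulus ξ - ξ * deriv doubleLogModulus ξ) := by linarith

lemma isCCFModulus_doubleLogModulus {a B : ℝ} (ha : 0 < a) (ha_le : a ≤ 1 / 2000) (hB : 0 < B) :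
    IsCCFModulus fun z => a * doubleLogModulus (B * z) := by
  refine isKNVModulus_doubleLogModulus.isCCFModulus_scale ha hB
    (fun ξ hξ => integrableOn_doubleLogModulus_div_sq hξ) fun ξ hξ => ?_
  have hdrift : ξ * deriv doubleLogModulus ξ * hilbertModulus doubleLogModulus ξ ≤
      53 * (doubleLogModulus ξ - ξ * deriv doubleLogModulus ξ) := by
    rcases le_total ξ 1 with hξ₁ | hξ₁
    exacts [mul_deriv_mul_hilbertModulus_le_of_le_one hξ hξ₁,
      mul_deriv_mul_hilbertModulus_le_of_one_le hξ₁]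
  have hgap : 0 < doubleLogModulus ξ - ξ * deriv doubleLogModulus ξ := by
    have hΛ := one_pos.trans_le (one_le_innerLog hξ.le)
    have := Real.sqrt_pos.2 hξ
    exact (pow_three_div_le_doubleLogModulus_sub hξ.le).trans_lt' (by positivity)
  have hconst : 72 / Real.pi * a * 53 < 1 := by
    rw [div_mul_eq_mul_div, div_mul_eq_mul_div, div_lt_one Real.pi_pos]
    linarith [Real.pi_gt_three]
  calc 72 / Real.pi * a * (ξ * deriv doubleLogModulus ξ *
        hilbertModulus doubleLogModulus ξ)
      ≤ 72 / Real.pi * a *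
        (53 * (doubleLogModulus ξ - ξ * deriv doubleLogModulus ξ)) := by
        have := Real.pi_pos
        gcongr
    _ = 72 / Real.pi * a * 53 *
        (doubleLogModulus ξ - ξ * deriv doubleLogModulus ξ) := by ring
    _ < doubleLogModulus ξ - ξ * deriv doubleLogModulus ξ := mul_lt_of_lt_one_left hgap hconst
    _ ≤ 2 * doubleLogModulus ξ - doubleLogModulus (2 * ξ) := by
        linarith [doubleLogModulus_two_mul_le hξ.le]

end HilbertModulusBounds

section Growth

lemma exp_sub_one_le_mul_exp (u : ℝ) : Real.exp u - 1 ≤ u * Real.exp u := by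
  have h := mul_le_mul_of_nonneg_right (Real.add_one_le_exp (-u)) (Real.exp_pos u).le
  rw [← Real.exp_add, neg_add_cancel, Real.exp_zero] at h
  linarith

lemma exp_two_mul_exp_sub_one_le {n : ℝ} (hn : 0 ≤ n) :
    Real.exp (2 * (Real.exp n - 1)) - 1 ≤ n * Real.exp (Real.exp (3 * n)) := by
  have hexp : n + 1 ≤ Real.exp n := Real.add_one_le_exp n
  have hexponent : 1 + n + 2 * (Real.exp n - 1) ≤ Real.exp (3 * n) := by
    rw [show 3 * n = (3 : ℕ) * n by norm_num, Real.exp_nat_mul]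
    nlinarith [mul_nonneg (sq_nonneg (Real.exp n - 1)) (by positivity : 0 ≤ Real.exp n + 2)]
  calc Real.exp (2 * (Real.exp n - 1)) - 1
      ≤ 2 * (Real.exp n - 1) * Real.exp (2 * (Real.exp n - 1)) := exp_sub_one_le_mul_exp _
    _ ≤ Real.exp 1 * (n * Real.exp n) * Real.exp (2 * (Real.exp n - 1)) := by
        have := Real.add_one_le_exp 1
        gcongr
        · linarith
        · linarith
        · exact exp_sub_one_le_mul_exp n
    _ = n * Real.exp (1 + n + 2 * (Real.exp n - 1)) := by
        rw [Real.exp_add, Real.exp_add]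
        ring
    _ ≤ n * Real.exp (Real.exp (3 * n)) := by gcongr

lemma le_softSqrt {t : ℝ} (ht : 0 ≤ t) : t ≤ softSqrt ((1 + t) ^ 2 - 1) := by
  have hsqrt : √((1 + t) ^ 2 - 1) ≤ 1 + t := Real.sqrt_le_left (by positivity) |>.2 (by linarith)
  rw [softSqrt, le_div_iff₀ (by positivity)]
  nlinarith

lemma le_doubleLogModulus {n : ℝ} (hn : 0 ≤ n) :
    n ≤ doubleLogModulus (n * Real.exp (Real.exp (3 * n))) := by
  set t := Real.exp (Real.exp n - 1) - 1 with ht_def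
  have ht : 0 ≤ t := sub_nonneg.2 <| Real.one_le_exp <| sub_nonneg.2 <| Real.one_le_exp hn
  have harg : (1 + t) ^ 2 - 1 ≤ n * Real.exp (Real.exp (3 * n)) := by
    rw [ht_def, add_sub_cancel, ← Real.exp_nat_mul]
    exact exp_two_mul_exp_sub_one_le hn
  calc n = Real.log (1 + Real.log (1 + t)) := by simp [ht_def]
    _ ≤ doubleLogModulus ((1 + t) ^ 2 - 1) := by
        have := Real.log_nonneg (by linarith : 1 ≤ 1 + t)
        rw [doubleLogModulus, innerLog]
        gcongr
        exact le_softSqrt ht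
    _ ≤ _ := strictMonoOn_doubleLogModulus.monotoneOn (mem_Ici.2 (by nlinarith))
        (mem_Ici.2 (by positivity)) harg

lemma abs_sub_lt_doubleLogModulus {f : ℝ → ℝ} {M G a B : ℝ} (hf : Differentiable ℝ f)
    (hM : ∀ x, |f x| ≤ M) (hG : ∀ x, |deriv f x| ≤ G) (ha : 0 < a)
    (hB : G * Real.exp (Real.exp (6 * M / a)) < a * B) {x y : ℝ} (hxy : x ≠ y) :
    |f x - f y| < a * doubleLogModulus (B * |x - y|) := by
  have : 0 < |x - y| := abs_pos.2 (sub_ne_zero.2 hxy)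
  have hlip : |f x - f y| ≤ G * |x - y| := by
    simpa [Real.norm_eq_abs] using convex_univ.norm_image_sub_le_of_norm_deriv_le
      (fun z _ => hf z) (fun z _ => hG z) (mem_univ y) (mem_univ x)
  have hosc : |f x - f y| ≤ 2 * M := by linarith [abs_sub (f x) (f y), hM x, hM y]
  set n := |f x - f y| / a
  have hn : 0 ≤ n := by positivity
  have hgrowth : n * Real.exp (Real.exp (3 * n)) < B * |x - y| := by
    calc n * Real.exp (Real.exp (3 * n))
        ≤ G * |x - y| / a * Real.exp (Real.exp (6 * M / a)) := by
          have hexponent : 3 * n ≤ 6 * M / a := by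
            rw [mul_div_assoc']
            exact div_le_div_of_nonneg_right (by linarith) ha.le
          have hslope : n ≤ G * |x - y| / a := div_le_div_of_nonneg_right hlip ha.le
          exact mul_le_mul hslope (by gcongr) (by positivity) (hn.trans hslope)
      _ = G * Real.exp (Real.exp (6 * M / a)) / a * |x - y| := by ring
      _ < B * |x - y| := by
          gcongr
          rwa [div_lt_iff₀' ha]
  have hnonneg : 0 ≤ n * Real.exp (Real.exp (3 * n)) := by positivity
  rw [← div_lt_iff₀' ha]
  exact (le_doubleLogModulus hn).trans_lt
    (strictMonoOn_doubleLogModulus hnonneg (hnonneg.trans hgrowth.le) hgrowth)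

end Growth

/-! ### The gradient bound -/

namespace IsCCFSolution

variable {T per : ℝ} {θ Hθ Lθ : ℝ → ℝ → ℝ}

lemma abs_deriv_le (hθ : IsCCFSolution T per θ Hθ Lθ) {M G : ℝ} (hM : ∀ x, |θ x 0| ≤ M)
    (hG : ∀ x, |deriv (fun x => θ x 0) x| ≤ G) {t : ℝ} (ht : t ∈ Icc 0 T) (x : ℝ) :
    |deriv (fun x => θ x t) x| ≤ G * Real.exp (Real.exp (12000 * M)) := by
  have h0 : 0 ∈ Icc 0 T := left_mem_Icc.2 (ht.1.trans ht.2)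
  have hG₀ : 0 ≤ G := (abs_nonneg _).trans (hG 0)
  refine le_of_forall_gt_imp_ge_of_dense fun b hb => ?_
  have hb₀ : 0 < b := hb.trans_le' (by positivity)
  have hω : IsCCFModulus fun z => 1 / 2000 * doubleLogModulus (2000 * b * z) :=
    isCCFModulus_doubleLogModulus (by norm_num) le_rfl (by positivity)
  have hinit : ∀ x y, x ≠ y →
      |θ x 0 - θ y 0| < 1 / 2000 * doubleLogModulus (2000 * b * |x - y|) := fun x y hxy => by
    refine abs_sub_lt_doubleLogModulus (f := fun x => θ x 0)
      ((hθ.contDiff 0 h0).differentiable two_ne_zero) hM hG (by norm_num) ?_ hxy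
    rw [show 6 * M / (1 / 2000) = 12000 * M by ring]
    linarith
  have hlt := (hθ.hasModulus hω hinit ht).abs_deriv_lt (hθ.contDiff t ht) hω.tendsto_atTop x
  rw [deriv_scale, mul_zero, deriv_doubleLogModulus_zero] at hlt
  linarith

end IsCCFSolution

lemma periodic_deriv {f : ℝ → ℝ} {per : ℝ} (hf : Function.Periodic f per) :
    Function.Periodic (deriv f) per := fun x => by
  rw [← deriv_comp_add_const, hf.funext]

section Slices

variable {S : Set ℝ} {θ : ℝ → ℝ → ℝ}

lemma contDiff_slice {n : WithTop ℕ∞}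
    (hθ : ContDiffOn ℝ n (fun p : ℝ × ℝ => θ p.1 p.2) (univ ×ˢ S)) {t : ℝ} (ht : t ∈ S) :
    ContDiff ℝ n fun x => θ x t := by
  rw [← contDiffOn_univ]
  exact hθ.comp (f := fun x => (x, t)) (by fun_prop) fun x _ => ⟨mem_univ x, ht⟩

lemma continuousOn_deriv_slice
    (hθ : ContDiffOn ℝ 1 (fun p : ℝ × ℝ => θ p.1 p.2) (univ ×ˢ S)) :
    ContinuousOn (fun p : ℝ × ℝ => deriv (fun x => θ x p.2) p.1) (univ ×ˢ S) := by
  intro p hp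
  obtain ⟨u, hu, hsub, -, θ', hderiv, hcont⟩ :=
    (contDiffWithinAt_succ_iff_hasFDerivWithinAt' (n := 0) (by simp)).1 (hθ p hp)
  rw [insert_eq_of_mem hp] at hu hsub
  have hslice : ∀ q ∈ u, deriv (fun x => θ x q.2) q.1 = θ' q (1, 0) := fun q hq => by
    have hline : HasDerivWithinAt (fun x => (x, q.2)) ((1, 0) : ℝ × ℝ) univ q.1 :=
      ((hasDerivAt_id q.1).prodMk (hasDerivAt_const q.1 q.2)).hasDerivWithinAt
    have hmaps : MapsTo (fun x : ℝ => (x, q.2)) univ (univ ×ˢ S) := fun x _ =>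
      ⟨mem_univ x, (hsub hq).2⟩
    have := (hderiv q hq).comp_hasDerivWithinAt q.1 hline hmaps
    exact (hasDerivWithinAt_univ.1 this).deriv
  exact (hcont.continuousWithinAt.clm_apply continuousWithinAt_const).congr_of_eventuallyEq
    (eventually_of_mem hu hslice) (hslice p (mem_of_mem_nhdsWithin hp hu))

end Slices

theorem critical_ccf_gradient_bound_general :
    ∃ C > (0:ℝ), ∀ (T per : ℝ) (θ Hθ Lθ : ℝ → ℝ → ℝ), IsCCFSolution T per θ Hθ Lθ →
      ∀ t ∈ Icc (0:ℝ) T,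
        (⨆ x, |deriv (fun x' => θ x' t) x|) ≤
          (⨆ x, |deriv (fun x' => θ x' 0) x|) * Real.exp (Real.exp (C * ⨆ x, |θ x 0|)) := by
  refine ⟨12000, by norm_num, fun T per θ Hθ Lθ hθ t ht => ciSup_le fun x => ?_⟩
  have h0 : 0 ∈ Icc 0 T := left_mem_Icc.2 (ht.1.trans ht.2)
  have hsmooth := hθ.contDiff 0 h0
  exact hθ.abs_deriv_le
    (le_ciSup (bddAbove_range_abs_of_periodic hsmooth.continuous hθ.per_pos (hθ.periodic 0 h0)))
    (le_ciSup (bddAbove_range_abs_of_periodic (hsmooth.continuous_deriv one_le_two) hθ.per_pos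
      (periodic_deriv (hθ.periodic 0 h0)))) ht x

/-- **A priori gradient bound for the critical Córdoba–Córdoba–Fontelos equation
(eq. (gradsqgest)).** There is an absolute constant `C > 0` such that every smooth
space-periodic solution of `∂_t θ = (Hθ) ∂_x θ − L θ` on `[0,T]`, where `H` is the Hilbert
transform in `x` and `L f(x) = P.V.∫ (f(x) − f(x+y))/|y|² dy`, satisfies
`‖∂_x θ(·,t)‖_∞ ≤ ‖∂_x θ(·,0)‖_∞ · exp(exp(C‖θ(·,0)‖_∞))` for all `t ∈ [0,T]`. -/
theorem critical_ccf_gradient_bound :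
    ∃ C > (0:ℝ), ∀ (T per : ℝ) (θ Hθ Lθ : ℝ → ℝ → ℝ),
      0 ≤ T → 0 < per →
      ContDiffOn ℝ (⊤ : ℕ∞) (fun p : ℝ × ℝ => θ p.1 p.2) (univ ×ˢ Icc 0 T) →
      (∀ t ∈ Icc (0:ℝ) T, ∀ x, θ (x + per) t = θ x t) →
      (∀ t ∈ Icc (0:ℝ) T, ∀ x, HilbertPVAt (fun x' => θ x' t) x (Real.pi * Hθ x t)) →
      (∀ t ∈ Icc (0:ℝ) T, ∀ x,
        Tendsto (fun ε => ∫ y in {y : ℝ | ε < |y|}, (θ x t - θ (x + y) t) / y ^ (2:ℕ))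
          (nhdsWithin 0 (Ioi 0)) (nhds (Lθ x t))) →
      (∀ x, ∀ t ∈ Icc (0:ℝ) T,
        HasDerivWithinAt (fun s => θ x s)
          (Hθ x t * deriv (fun x' => θ x' t) x - Lθ x t) (Icc 0 T) t) →
      ∀ t ∈ Icc (0:ℝ) T,
        (⨆ x, |deriv (fun x' => θ x' t) x|) ≤
          (⨆ x, |deriv (fun x' => θ x' 0) x|) * Real.exp (Real.exp (C * ⨆ x, |θ x 0|)) := by
  obtain ⟨C, hC, hbound⟩ := critical_ccf_gradient_bound_general
  refine ⟨C, hC, fun T per θ Hθ Lθ _ hper hθ hperiodic hH hL hevol => hbound T per θ Hθ Lθ ?_⟩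
  exact
    { per_pos := hper
      contDiff := fun t ht => contDiff_infty.1 (contDiff_slice hθ ht) 2
      continuousOn_deriv := continuousOn_deriv_slice (hθ.of_le (mod_cast le_top))
      periodic := fun t ht x => hperiodic t ht x
      continuousOn_time := fun x t ht => (hevol x t ht).continuousWithinAt
      hilbert := hH
      dissipation := hL
      hasDerivWithinAt := hevol }
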